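/- arXiv:2212.03405 — 7 statements merged into one kernel-verified Lean document; each statement's English description precedes it below -/
import Mathlib

section
/- Let (a_k)_{k≥0} and (y_k)_{k≥0} be nonnegative real sequences such that ∑_{k=0}^∞ a_k < ∞, and let γ ∈ (0,1). Suppose there exists K ≥ 1 such that for all k ≥ K one has y_k ≤ ∑_{j=0}^{k-1} γ^{k-j} a_j y_j. Then there exists a constant C > 0 such that y_k ≤ C γ^k for all sufficiently large k. -/
open Filter

/-- Discrete Grönwall inequality: if `z k ≤ ∑_{j<k} a_j z_j` for `k ≥ K`, then these sums grow at
most like `exp (∑_{j<k} a_j)`. -/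
theorem sum_mul_le_sum_mul_exp_sum {a z : ℕ → ℝ} {K : ℕ} (ha : ∀ k, 0 ≤ a k) (hz : ∀ k, 0 ≤ z k)
    (h : ∀ k, K ≤ k → z k ≤ ∑ j ∈ Finset.range k, a j * z j) {k : ℕ} (hk : K ≤ k) :
    ∑ j ∈ Finset.range k, a j * z j ≤
      (∑ j ∈ Finset.range K, a j * z j) * Real.exp (∑ j ∈ Finset.range k, a j) := by
  induction k, hk using Nat.le_induction with
  | base =>
    exact le_mul_of_one_le_right (Finset.sum_nonneg fun j _ => mul_nonneg (ha j) (hz j))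
      (Real.one_le_exp (Finset.sum_nonneg fun j _ => ha j))
  | succ k hk ih =>
    have hS : 0 ≤ ∑ j ∈ Finset.range k, a j * z j :=
      Finset.sum_nonneg fun j _ => mul_nonneg (ha j) (hz j)
    rw [Finset.sum_range_succ, Finset.sum_range_succ a, Real.exp_add, ← mul_assoc]
    calc _ ≤ (∑ j ∈ Finset.range k, a j * z j) + a k * ∑ j ∈ Finset.range k, a j * z j := by
          gcongr
          · exact ha k
          · exact h k hk
      _ = (∑ j ∈ Finset.range k, a j * z j) * (a k + 1) := by ring
      _ ≤ _ := mul_le_mul ih (Real.add_one_le_exp _) (by linarith [ha k]) (hS.trans ih)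

/-- **Technical sequence lemma.** If `(a_k)` and `(y_k)` are nonnegative sequences with
`∑ a_k < ∞`, `γ ∈ (0,1)`, and `y_k ≤ ∑_{j<k} γ^(k-j) a_j y_j` for all sufficiently large `k`,
then `y_k ≲ γ^k` for sufficiently large `k`. -/
theorem sequence_lemma (a y : ℕ → ℝ) (ha : ∀ k, 0 ≤ a k) (hy : ∀ k, 0 ≤ y k)
    (hsum : Summable a) (γ : ℝ) (hγ : γ ∈ Set.Ioo (0 : ℝ) 1)
    (K : ℕ) (hK : 1 ≤ K)
    (hrec : ∀ k, K ≤ k → y k ≤ ∑ j ∈ Finset.range k, γ ^ (k - j) * a j * y j) :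
    ∃ C > 0, ∀ᶠ k in atTop, y k ≤ C * γ ^ k := by
  obtain ⟨hγ0, -⟩ := hγ
  have hz : ∀ k, 0 ≤ y k / γ ^ k := fun k => div_nonneg (hy k) (pow_pos hγ0 k).le
  have h : ∀ k, K ≤ k → y k / γ ^ k ≤ ∑ j ∈ Finset.range k, a j * (y j / γ ^ j) := by
    intro k hk
    rw [div_le_iff₀ (pow_pos hγ0 k), Finset.sum_mul]
    refine (hrec k hk).trans_eq (Finset.sum_congr rfl fun j hj => ?_)
    rw [pow_sub₀ γ hγ0.ne' (Finset.mem_range.mp hj).le]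
    ring
  have hS : 0 ≤ ∑ j ∈ Finset.range K, a j * (y j / γ ^ j) :=
    Finset.sum_nonneg fun j _ => mul_nonneg (ha j) (hz j)
  refine ⟨(∑ j ∈ Finset.range K, a j * (y j / γ ^ j)) * Real.exp (∑' j, a j) + 1,
    by positivity, ?_⟩
  filter_upwards [eventually_ge_atTop K] with k hk
  rw [← div_le_iff₀ (pow_pos hγ0 k)]
  calc y k / γ ^ k ≤ _ := h k hk
    _ ≤ _ := sum_mul_le_sum_mul_exp_sum ha hz h hk
    _ ≤ (∑ j ∈ Finset.range K, a j * (y j / γ ^ j)) * Real.exp (∑' j, a j) := by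
      gcongr
      exact hsum.sum_le_tsum _ fun j _ => ha j
    _ ≤ _ := (lt_add_one _).le
end

section
/- There is an absolute constant C > 0 with the following property. Let t₀ ≥ 0 and let R, R₁ satisfy R ≥ 4R₁ > 0. Let g : (0,∞) → ℝ be measurable with ∫_0^∞ |g(s)|² s² ds < ∞ and g(s) = 0 for s outside (t₀+R, t₀+2R). Define u(r,t) := (1/(2r)) ∫_{r-t}^{r+t} h(s) ds for r > 0, t ∈ ℝ, where h(s) := s·g(|s|) (the odd extension of s·g(s)); this is the radial free wave in ℝ³ with initial data (0, u₁) where u₁(x) = g(|x|). Then ‖u‖_{Y(t₀+R₁, t₀+2R₁)} ≤ C (R₁/R)^{1/10} ( ∫_0^∞ |g(s)|² s² ds )^{1/2}. -/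
open MeasureTheory Set

/-- The channel norm `‖u‖_{Y(a,b)}` over the region `{(r,t) : |t|+a < r < |t|+b}`. -/
noncomputable def Ychannel (u : ℝ → ℝ → ℝ) (a b : ℝ) : ℝ :=
  (∫ t : ℝ, Real.sqrt (∫ r in Ioo (|t| + a) (|t| + b), |u r t| ^ 10 * r ^ 2)) ^ ((1 : ℝ) / 5)

/-- Cauchy–Schwarz for `|g s * s|` on an interval containing the support of `g`; only the square is
assumed measurable. -/
theorem integrableOn_abs_mul_and_integral_le {g : ℝ → ℝ} {a b : ℝ} (ha : 0 ≤ a) (hab : a < b)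
    (hg : IntegrableOn (fun s => g s ^ 2 * s ^ 2) (Ioi 0))
    (hsupp : ∀ s, s ∉ Ioo a b → g s = 0) :
    IntegrableOn (fun s => |g s * s|) (Ioi 0) ∧
      ∫ s in Ioi (0 : ℝ), |g s * s| ≤
        Real.sqrt (b - a) * Real.sqrt (∫ s in Ioi (0 : ℝ), g s ^ 2 * s ^ 2) := by
  have hsub : Ioo a b ⊆ Ioi (0 : ℝ) := fun s hs => lt_of_le_of_lt ha hs.1
  have hsq : ∀ s, |g s * s| ^ 2 = g s ^ 2 * s ^ 2 := fun s => by rw [sq_abs, mul_pow]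
  have hgI : IntegrableOn (fun s => g s ^ 2 * s ^ 2) (Ioo a b) := hg.mono_set hsub
  have hmeas : AEStronglyMeasurable (fun s => |g s * s|) (volume.restrict (Ioo a b)) := by
    have h := Real.continuous_sqrt.comp_aestronglyMeasurable hgI.aestronglyMeasurable
    refine h.congr (Filter.Eventually.of_forall fun s => ?_)
    change Real.sqrt (g s ^ 2 * s ^ 2) = _
    rw [← hsq, Real.sqrt_sq (abs_nonneg _)]
  have hL2 : MemLp (fun s => |g s * s|) 2 (volume.restrict (Ioo a b)) := by
    rw [memLp_two_iff_integrable_sq hmeas]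
    simp_rw [hsq]
    exact hgI
  have hint : IntegrableOn (fun s => |g s * s|) (Ioo a b) := hL2.integrable one_le_two
  have hzero : ∀ s ∈ Ioi (0 : ℝ) \ Ioo a b, g s = 0 := fun s hs => hsupp s hs.2
  refine ⟨hint.of_forall_sdiff_eq_zero measurableSet_Ioi fun s hs => by simp [hzero s hs], ?_⟩
  rw [setIntegral_eq_of_subset_of_forall_sdiff_eq_zero measurableSet_Ioi hsub
      (f := fun s => |g s * s|) (fun s hs => by simp [hzero s hs]),
    setIntegral_eq_of_subset_of_forall_sdiff_eq_zero measurableSet_Ioi hsub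
      (f := fun s => g s ^ 2 * s ^ 2) (fun s hs => by simp [hzero s hs]),
    ← Real.sqrt_mul (by linarith)]
  refine Real.le_sqrt_of_sq_le ?_
  have hL : 0 < b - a := by linarith
  set I := ∫ s in Ioo a b, |g s * s|
  have hvar : 0 ≤ ∫ s in Ioo a b, (|g s * s| - I / (b - a)) ^ 2 :=
    integral_nonneg fun s => sq_nonneg _
  have hexp : ∫ s in Ioo a b, (|g s * s| - I / (b - a)) ^ 2
      = (∫ s in Ioo a b, g s ^ 2 * s ^ 2) - I ^ 2 / (b - a) := by
    have : ∀ s, (|g s * s| - I / (b - a)) ^ 2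
        = (g s ^ 2 * s ^ 2 - 2 * (I / (b - a)) * |g s * s|) + (I / (b - a)) ^ 2 := by
      intro s; rw [← hsq]; ring
    simp_rw [this]
    have hd : Integrable (fun s => g s ^ 2 * s ^ 2 - 2 * (I / (b - a)) * |g s * s|)
        (volume.restrict (Ioo a b)) := hgI.sub (hint.const_mul _)
    rw [integral_add hd (integrable_const _), integral_sub hgI (hint.const_mul _), integral_const_mul, setIntegral_const,
      Real.volume_real_Ioo_of_le hab.le, smul_eq_mul]
    change _ - 2 * (I / (b - a)) * I + _ = _
    field_simp
    ring
  rw [hexp, sub_nonneg, div_le_iff₀ hL] at hvar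
  linarith

/-- Bound for the integral in d'Alembert's formula at points outside the light cone. -/
theorem abs_integral_mul_comp_abs_le {g : ℝ → ℝ} {r t B : ℝ} (hr : |t| < r)
    (hint : IntegrableOn (fun s => |g s * s|) (Ioi 0))
    (hB : ∫ s in Ioi (0 : ℝ), |g s * s| ≤ B) :
    |(∫ s in (r - t)..(r + t), s * g |s|)| ≤ B := by
  have ht := abs_lt.1 hr
  have hsub : uIoc (r - t) (r + t) ⊆ Ioi 0 := fun s hs =>
    lt_of_le_of_lt (le_min (by linarith) (by linarith)) hs.1
  calc |(∫ s in (r - t)..(r + t), s * g |s|)|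
      ≤ ∫ s in uIoc (r - t) (r + t), |s * g (|s|)| :=
        intervalIntegral.norm_integral_le_integral_norm_uIoc (f := fun s => s * g |s|)
    _ = ∫ s in uIoc (r - t) (r + t), |g s * s| :=
        setIntegral_congr_fun measurableSet_uIoc fun s hs => by
          have h0 : 0 < s := hsub hs
          simp only [abs_of_pos h0, mul_comm]
    _ ≤ ∫ s in Ioi (0 : ℝ), |g s * s| :=
        setIntegral_mono_set hint (Filter.Eventually.of_forall fun s => abs_nonneg _)
          hsub.eventuallyLE
    _ ≤ B := hB

/-- The free wave vanishes before the data has propagated to the point. -/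
theorem integral_mul_comp_abs_eq_zero {g : ℝ → ℝ} {r t a : ℝ} (hr : |t| < r) (hra : r + |t| ≤ a)
    (hg : ∀ s ≤ a, g s = 0) : ∫ s in (r - t)..(r + t), s * g |s| = 0 := by
  have ht := abs_lt.1 hr
  refine intervalIntegral.integral_zero_ae (Filter.Eventually.of_forall fun s hs => ?_)
  have h0 : 0 < s := lt_of_le_of_lt (le_min (by linarith) (by linarith)) hs.1
  have h1 : s ≤ a := hs.2.trans (max_le (by linarith [neg_abs_le t]) (by linarith [le_abs_self t]))
  rw [abs_of_pos h0, hg s h1, mul_zero]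

/-- **Channel decay for free waves with data `(0, u₁)` supported in a distant annulus.**
If `g` is radial `L²` data supported in `(t₀+R, t₀+2R)` with `R ≥ 4R₁ > 0`, then the free wave
`u(r,t) = (1/(2r)) ∫_{r-t}^{r+t} s·g(|s|) ds` satisfies
`‖u‖_{Y(t₀+R₁, t₀+2R₁)} ≤ C (R₁/R)^{1/10} (∫_0^∞ g(s)² s² ds)^{1/2}`. -/
theorem channel_by_nonlinear_preliminary :
    ∃ C > 0, ∀ t₀ R R₁ : ℝ, 0 ≤ t₀ → 0 < R₁ → 4 * R₁ ≤ R →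
      ∀ g : ℝ → ℝ,
      IntegrableOn (fun s => g s ^ 2 * s ^ 2) (Ioi 0) →
      (∀ s : ℝ, s ∉ Ioo (t₀ + R) (t₀ + 2 * R) → g s = 0) →
      Ychannel (fun r t => (1 / (2 * r)) * ∫ s in (r - t)..(r + t), s * g |s|)
          (t₀ + R₁) (t₀ + 2 * R₁)
        ≤ C * (R₁ / R) ^ ((1 : ℝ) / 10)
            * Real.sqrt (∫ s in Ioi (0 : ℝ), g s ^ 2 * s ^ 2) := by
  refine ⟨2, two_pos, fun t₀ R R₁ ht₀ hR₁ hRR₁ g hg hsupp => ?_⟩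
  have hR : 0 < R := by linarith
  obtain ⟨hint, hB⟩ := integrableOn_abs_mul_and_integral_le (by linarith) (by linarith) hg hsupp
  rw [show t₀ + 2 * R - (t₀ + R) = R by ring] at hB
  set N := Real.sqrt (∫ s in Ioi (0 : ℝ), g s ^ 2 * s ^ 2)
  have hN : 0 ≤ N := Real.sqrt_nonneg _
  set K := 16 * N ^ 5 * (Real.sqrt R₁ * Real.sqrt R ^ 5) / R ^ 4 with hK
  have hK0 : 0 ≤ K := by positivity
  have hpt : ∀ t : ℝ, Real.sqrt (∫ r in Ioo (|t| + (t₀ + R₁)) (|t| + (t₀ + 2 * R₁)),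
      |(1 / (2 * r)) * (∫ s in (r - t)..(r + t), s * g |s|)| ^ 10 * r ^ 2)
        ≤ K * (1 + (4 / R * t) ^ 2)⁻¹ := by
    intro t
    rcases le_or_gt |t| (R / 4) with ht | ht
    · rw [setIntegral_eq_zero_of_forall_eq_zero, Real.sqrt_zero]
      · positivity
      · intro r hr
        rw [integral_mul_comp_abs_eq_zero (a := t₀ + R) (by linarith [hr.1])
          (by linarith [hr.2]) fun s hs => hsupp s fun h => not_lt.2 hs h.1]
        simp
    · have htp : 0 < |t| := lt_trans (by positivity) ht
      have hmain : ∫ r in Ioo (|t| + (t₀ + R₁)) (|t| + (t₀ + 2 * R₁)),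
          |(1 / (2 * r)) * (∫ s in (r - t)..(r + t), s * g |s|)| ^ 10 * r ^ 2
            ≤ (Real.sqrt R * N / 2) ^ 10 / |t| ^ 8 * R₁ := by
        refine (Real.le_norm_self _).trans ((norm_setIntegral_le_of_norm_le_const measure_Ioo_lt_top
          (C := (Real.sqrt R * N / 2) ^ 10 / |t| ^ 8) fun r hr => ?_).trans_eq ?_)
        · have hrt : |t| < r := by linarith [hr.1]
          have hr0 : 0 < r := htp.trans hrt
          have hb := abs_integral_mul_comp_abs_le hrt hint hB
          rw [Real.norm_of_nonneg (by positivity), abs_mul, abs_of_pos (by positivity), mul_pow]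
          calc (1 / (2 * r)) ^ 10 * |(∫ s in (r - t)..(r + t), s * g |s|)| ^ 10 * r ^ 2
              ≤ (1 / (2 * r)) ^ 10 * (Real.sqrt R * N) ^ 10 * r ^ 2 := by gcongr
            _ = (Real.sqrt R * N / 2) ^ 10 / r ^ 8 := by field_simp
            _ ≤ _ := by gcongr
        · rw [Real.volume_real_Ioo_of_le (by linarith)]
          ring
      refine (Real.sqrt_le_sqrt hmain).trans (Real.sqrt_le_iff.2 ⟨by positivity, ?_⟩)
      have hx : 1 ≤ (4 / R * |t|) := by
        rw [div_mul_eq_mul_div, one_le_div hR]; linarith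
      have hinv : 1 / (2 * (4 / R * |t|) ^ 4) ≤ (1 + (4 / R * t) ^ 2)⁻¹ := by
        rw [← one_div]
        refine one_div_le_one_div_of_le (by positivity) ?_
        rw [mul_pow _ t, ← sq_abs t, ← mul_pow]
        nlinarith [one_le_pow₀ hx (n := 2)]
      calc (Real.sqrt R * N / 2) ^ 10 / |t| ^ 8 * R₁
          = (K * (1 / (2 * (4 / R * |t|) ^ 4))) ^ 2 := by
            rw [hK]
            field_simp
            rw [Real.sq_sqrt hR₁.le]
            ring
        _ ≤ _ := by gcongr
  have hintegrable : Integrable fun t : ℝ => K * (1 + (4 / R * t) ^ 2)⁻¹ :=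
    (integrable_inv_one_add_sq.comp_mul_left' (by positivity)).const_mul K
  have hval : ∫ t : ℝ, K * (1 + (4 / R * t) ^ 2)⁻¹ = K * (R / 4 * Real.pi) := by
    rw [integral_const_mul, Measure.integral_comp_mul_left (fun x : ℝ => (1 + x ^ 2)⁻¹),
      integral_univ_inv_one_add_sq, inv_div, abs_of_pos (by positivity), smul_eq_mul]
  have hKs : K * (R / 4 * Real.pi) = 4 * Real.pi * (Real.sqrt (R₁ / R) * N ^ 5) := by
    have h6 : Real.sqrt R ^ 6 = R ^ 3 := by
      rw [show 6 = 2 * 3 by rfl, pow_mul, Real.sq_sqrt hR.le]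
    rw [hK, Real.sqrt_div hR₁.le]
    field_simp
    rw [h6]
    ring
  have hroot : (2 * (R₁ / R) ^ ((1 : ℝ) / 10) * N) ^ 5 = 32 * (Real.sqrt (R₁ / R) * N ^ 5) := by
    rw [mul_pow, mul_pow, ← Real.rpow_mul_natCast (by positivity), Real.sqrt_eq_rpow]
    norm_num
    ring
  unfold Ychannel
  rw [one_div (5 : ℝ), Real.rpow_inv_le_iff_of_pos (integral_nonneg fun t => Real.sqrt_nonneg _)
    (by positivity) (by norm_num)]
  rw [show (5 : ℝ) = ((5 : ℕ) : ℝ) by norm_num, Real.rpow_natCast, hroot]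
  calc _ ≤ ∫ t : ℝ, K * (1 + (4 / R * t) ^ 2)⁻¹ :=
        integral_mono_of_nonneg (Filter.Eventually.of_forall fun t => Real.sqrt_nonneg _)
          hintegrable (Filter.Eventually.of_forall hpt)
    _ = 4 * Real.pi * (Real.sqrt (R₁ / R) * N ^ 5) := hval.trans hKs
    _ ≤ _ := by
      gcongr
      linarith [Real.pi_le_four]
end

section
/- There is an absolute constant C > 0 with the following property. Let f : (0,∞) → ℝ be locally absolutely continuous with lim_{r→∞} f(r) = 0 and D := ( ∫_0^∞ r² |f′(r)|² dr )^{1/2} < ∞. Viewing f as a time-independent function u(r,t) := f(r), its exterior norm satisfies ‖u‖_{Y(0,∞)} = ( ∫_{-∞}^{∞} ( ∫_{|t|}^{∞} |f(r)|^{10} r² dr )^{1/2} dt )^{1/5} ≤ C·D. -/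
open MeasureTheory Set

/-- The exterior norm `‖u‖_{Y(a,∞)}` over the region `{(r,t) : r > |t|+a}`. -/
noncomputable def Yext (u : ℝ → ℝ → ℝ) (a : ℝ) : ℝ :=
  (∫ t : ℝ, Real.sqrt (∫ r in Ioi (|t| + a), |u r t| ^ 10 * r ^ 2)) ^ ((1 : ℝ) / 5)

open scoped ENNReal

/-- Weighted Cauchy–Schwarz inequality for lower integrals on a half-line `(t, ∞)`. -/
lemma sq_lintegral_Ioi_le (F : ℝ → ℝ≥0∞) (hF : Measurable F) (p t : ℝ) (ht : 0 < t) :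
    (∫⁻ s in Ioi t, F s) ^ 2 ≤
      (∫⁻ s in Ioi t, ENNReal.ofReal (s ^ (-(2 * p)))) *
        ∫⁻ s in Ioi t, ENNReal.ofReal (s ^ (2 * p)) * F s ^ 2 := by
  have h1 : ∫⁻ s in Ioi t, F s =
      ∫⁻ s in Ioi t, ((fun s : ℝ => ENNReal.ofReal (s ^ (-p))) *
        fun s : ℝ => ENNReal.ofReal (s ^ p) * F s) s := by
    refine setLIntegral_congr_fun measurableSet_Ioi fun s hs => ?_
    have hs0 : 0 < s := ht.trans hs
    simp only [Pi.mul_apply]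
    rw [← mul_assoc, ← ENNReal.ofReal_mul (by positivity), ← Real.rpow_add hs0]
    simp
  have h2 := ENNReal.lintegral_mul_le_Lp_mul_Lq (volume.restrict (Ioi t))
    Real.HolderConjugate.two_two
    (f := fun s : ℝ => ENNReal.ofReal (s ^ (-p)))
    (g := fun s : ℝ => ENNReal.ofReal (s ^ p) * F s)
    (by fun_prop) (by fun_prop)
  rw [← h1] at h2
  have e1 : ∫⁻ s in Ioi t, ENNReal.ofReal (s ^ (-p)) ^ (2 : ℝ) =
      ∫⁻ s in Ioi t, ENNReal.ofReal (s ^ (-(2 * p))) := by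
    refine setLIntegral_congr_fun measurableSet_Ioi fun s hs => ?_
    have hs0 : 0 < s := ht.trans hs
    rw [ENNReal.rpow_two, ← ENNReal.ofReal_pow (by positivity), ← Real.rpow_mul_natCast hs0.le]
    congr 2
    push_cast
    ring
  have e2 : ∫⁻ s in Ioi t, (ENNReal.ofReal (s ^ p) * F s) ^ (2 : ℝ) =
      ∫⁻ s in Ioi t, ENNReal.ofReal (s ^ (2 * p)) * F s ^ 2 := by
    refine setLIntegral_congr_fun measurableSet_Ioi fun s hs => ?_
    have hs0 : 0 < s := ht.trans hs
    rw [ENNReal.rpow_two, mul_pow, ← ENNReal.ofReal_pow (by positivity),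
      ← Real.rpow_mul_natCast hs0.le]
    congr 3
    push_cast
    ring
  rw [e1, e2] at h2
  calc _ ≤ _ := pow_le_pow_left' h2 2
    _ = _ := by
      rw [mul_pow, ← ENNReal.rpow_mul_natCast, ← ENNReal.rpow_mul_natCast]
      norm_num

lemma lintegral_Ioi_rpow {q t : ℝ} (hq : q < -1) (ht : 0 < t) :
    ∫⁻ s in Ioi t, ENNReal.ofReal (s ^ q) = ENNReal.ofReal (-t ^ (q + 1) / (q + 1)) := by
  rw [← integral_Ioi_rpow_of_lt hq ht, ofReal_integral_eq_lintegral_ofReal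
    (integrableOn_Ioi_rpow_of_lt hq ht)]
  filter_upwards [ae_restrict_mem measurableSet_Ioi] with s hs
  exact Real.rpow_nonneg (ht.trans hs).le _

lemma lintegral_Ioo_rpow {q s : ℝ} (hq : -1 < q) (hs : 0 < s) :
    ∫⁻ t in Ioo 0 s, ENNReal.ofReal (t ^ q) = ENNReal.ofReal (s ^ (q + 1) / (q + 1)) := by
  have h : s ^ (q + 1) / (q + 1) = ∫ t in Ioo 0 s, t ^ q := by
    rw [← integral_Ioc_eq_integral_Ioo, ← intervalIntegral.integral_of_le hs.le,
      integral_rpow (Or.inl hq), Real.zero_rpow (by linarith), sub_zero]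
  rw [h, ofReal_integral_eq_lintegral_ofReal]
  · exact (intervalIntegral.integrableOn_Ioo_rpow_iff hs).2 hq
  · filter_upwards [ae_restrict_mem measurableSet_Ioo] with t ht
    exact Real.rpow_nonneg ht.1.le _

/-- Pointwise radial bound: `r H(r)² ≤ ∫₀^∞ s² F(s)² ds` for the tail `H(r) = ∫_r^∞ F`. -/
lemma ofReal_mul_sq_lintegral_Ioi_le (F : ℝ → ℝ≥0∞) (hF : Measurable F) {t : ℝ} (ht : 0 < t) :
    ENNReal.ofReal t * (∫⁻ s in Ioi t, F s) ^ 2 ≤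
      ∫⁻ s in Ioi (0 : ℝ), ENNReal.ofReal (s ^ 2) * F s ^ 2 := by
  have h := sq_lintegral_Ioi_le F hF 1 t ht
  rw [lintegral_Ioi_rpow (by norm_num) ht] at h
  norm_num at h
  calc ENNReal.ofReal t * (∫⁻ s in Ioi t, F s) ^ 2
      ≤ ENNReal.ofReal t * (ENNReal.ofReal (t ^ (-1 : ℝ)) *
          ∫⁻ s in Ioi t, ENNReal.ofReal (s ^ 2) * F s ^ 2) := by
        gcongr
    _ = ∫⁻ s in Ioi t, ENNReal.ofReal (s ^ 2) * F s ^ 2 := by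
        rw [← mul_assoc, ← ENNReal.ofReal_mul ht.le, Real.rpow_neg_one, mul_inv_cancel₀ ht.ne']
        simp
    _ ≤ _ := lintegral_mono_set (Ioi_subset_Ioi ht.le)

/-- Hardy's inequality for the tail `H(t) = ∫_t^∞ F`. -/
lemma lintegral_sq_lintegral_Ioi_le (F : ℝ → ℝ≥0∞) (hF : Measurable F) :
    ∫⁻ t in Ioi (0 : ℝ), (∫⁻ s in Ioi t, F s) ^ 2 ≤
      4 * ∫⁻ s in Ioi (0 : ℝ), ENNReal.ofReal (s ^ 2) * F s ^ 2 := by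
  set φ : ℝ → ℝ≥0∞ := fun s => ENNReal.ofReal (s ^ (3 / 2 : ℝ)) * F s ^ 2 with hφ
  have hφm : Measurable φ := by fun_prop
  set k : ℝ → ℝ → ℝ≥0∞ := fun t s =>
    {x : ℝ × ℝ | x.1 < x.2}.indicator
      (fun x => ENNReal.ofReal (2 * x.1 ^ (-(1 / 2) : ℝ)) * φ x.2) (t, s) with hk
  have hkm : Measurable (Function.uncurry k) :=
    Measurable.indicator (by fun_prop) (measurableSet_lt measurable_fst measurable_snd)
  calc ∫⁻ t in Ioi (0 : ℝ), (∫⁻ s in Ioi t, F s) ^ 2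
      ≤ ∫⁻ t in Ioi (0 : ℝ), ∫⁻ s in Ioi (0 : ℝ), k t s := by
        refine setLIntegral_mono' measurableSet_Ioi fun t ht => ?_
        have ht0 : 0 < t := ht
        have h := sq_lintegral_Ioi_le F hF (3 / 4) t ht0
        rw [lintegral_Ioi_rpow (by norm_num) ht0] at h
        refine h.trans ?_
        have e : ∫⁻ s in Ioi (0 : ℝ), k t s =
            ∫⁻ s in Ioi t, ENNReal.ofReal (2 * t ^ (-(1 / 2) : ℝ)) * φ s := by
          have : k t = (Ioi t).indicator
              (fun s => ENNReal.ofReal (2 * t ^ (-(1 / 2) : ℝ)) * φ s) := by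
            ext s
            simp [hk, indicator_apply]
          rw [this, setLIntegral_indicator measurableSet_Ioi,
            inter_eq_left.2 (Ioi_subset_Ioi ht0.le)]
        rw [e, lintegral_const_mul _ hφm, hφ]
        refine le_of_eq ?_
        congr 2
        · norm_num
          ring
        · norm_num
    _ = ∫⁻ s in Ioi (0 : ℝ), ∫⁻ t in Ioi (0 : ℝ), k t s :=
        lintegral_lintegral_swap hkm.aemeasurable
    _ = ∫⁻ s in Ioi (0 : ℝ), 4 * (ENNReal.ofReal (s ^ 2) * F s ^ 2) := by
        refine setLIntegral_congr_fun measurableSet_Ioi fun s hs => ?_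
        have hs0 : 0 < s := hs
        have : (fun t => k t s) = (Iio s).indicator
            (fun t => 2 * φ s * ENNReal.ofReal (t ^ (-(1 / 2) : ℝ))) := by
          ext t
          simp only [hk, indicator_apply, mem_ofPred_eq, mem_Iio]
          split_ifs
          · rw [ENNReal.ofReal_mul zero_le_two, ENNReal.ofReal_ofNat]
            ring
          · rfl
        rw [this, setLIntegral_indicator measurableSet_Iio, inter_comm, Ioi_inter_Iio,
          lintegral_const_mul _ (by fun_prop), lintegral_Ioo_rpow (by norm_num) hs0, hφ]
        have e : s ^ (-(1 / 2) + 1 : ℝ) / (-(1 / 2) + 1) = 2 * s ^ (1 / 2 : ℝ) := by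
          norm_num
          ring
        have e2 : ENNReal.ofReal (s ^ 2) =
            ENNReal.ofReal (s ^ (3 / 2 : ℝ)) * ENNReal.ofReal (s ^ (1 / 2 : ℝ)) := by
          rw [← ENNReal.ofReal_mul (by positivity), ← Real.rpow_add hs0]
          norm_num
        rw [e, e2, ENNReal.ofReal_mul zero_le_two, ENNReal.ofReal_ofNat]
        ring
    _ = _ := lintegral_const_mul _ (by fun_prop)

/-- Bound of the tenth moment of the tail `H(t) = ∫_t^∞ F` on `(t, ∞)`. -/
lemma lintegral_pow_ten_lintegral_Ioi_le (F : ℝ → ℝ≥0∞) (hF : Measurable F) (K : ℝ≥0∞)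
    (hK : ∫⁻ s in Ioi (0 : ℝ), ENNReal.ofReal (s ^ 2) * F s ^ 2 = K) {t : ℝ} (ht : 0 < t) :
    ∫⁻ r in Ioi t, (∫⁻ s in Ioi r, F s) ^ 10 * ENNReal.ofReal (r ^ 2) ≤
      4 * K ^ 3 * (∫⁻ s in Ioi t, F s) ^ 4 := by
  set H : ℝ → ℝ≥0∞ := fun r => ∫⁻ s in Ioi r, F s with hH
  have hanti : Antitone H := fun a b hab => lintegral_mono_set (Ioi_subset_Ioi hab)
  calc ∫⁻ r in Ioi t, H r ^ 10 * ENNReal.ofReal (r ^ 2)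
      ≤ ∫⁻ r in Ioi t, H t ^ 4 * K ^ 2 * H r ^ 2 := by
        refine setLIntegral_mono' measurableSet_Ioi fun r hr => ?_
        have hr0 : 0 < r := ht.trans hr
        have h := ofReal_mul_sq_lintegral_Ioi_le F hF hr0
        rw [hK] at h
        calc H r ^ 10 * ENNReal.ofReal (r ^ 2)
            = H r ^ 4 * (ENNReal.ofReal r * H r ^ 2) ^ 2 * H r ^ 2 := by
              rw [ENNReal.ofReal_pow hr0.le]
              ring
          _ ≤ _ := by
              gcongr
              exact hanti (le_of_lt hr)
    _ = H t ^ 4 * K ^ 2 * ∫⁻ r in Ioi t, H r ^ 2 :=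
        lintegral_const_mul _ (hanti.measurable.pow_const 2)
    _ ≤ H t ^ 4 * K ^ 2 * (4 * K) := by
        gcongr
        rw [← hK]
        exact (lintegral_mono_set (Ioi_subset_Ioi ht.le)).trans
          (lintegral_sq_lintegral_Ioi_le F hF)
    _ = _ := by ring

lemma lintegral_comp_abs_eq (g : ℝ → ℝ≥0∞) :
    ∫⁻ t : ℝ, g |t| = 2 * ∫⁻ t in Ioi (0 : ℝ), g t := by
  have h1 : ∫⁻ t in Ioi (0 : ℝ), g |t| = ∫⁻ t in Ioi (0 : ℝ), g t :=
    setLIntegral_congr_fun measurableSet_Ioi fun t ht => by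
      simp only [abs_of_pos (mem_Ioi.1 ht)]
  have h2 : ∫⁻ t in Iic (0 : ℝ), g |t| = ∫⁻ t in Ioi (0 : ℝ), g |t| := by
    have h := (Measure.measurePreserving_neg (volume : Measure ℝ)).setLIntegral_comp_preimage_emb
      (MeasurableEquiv.neg ℝ).measurableEmbedding (fun t => g |t|) (Ici 0)
    rw [← setLIntegral_congr (Ioi_ae_eq_Ici (a := (0 : ℝ)) (μ := volume))] at h
    simpa using h
  rw [← lintegral_add_compl _ (measurableSet_Ioi (a := (0 : ℝ))), compl_Ioi, h2, h1, two_mul]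

/-- A function vanishing at infinity is bounded by the tail integral of its derivative. -/
lemma enorm_le_lintegral_Ioi {f f' : ℝ → ℝ}
    (hf : ∀ a b : ℝ, 0 < a → a ≤ b → f b - f a = ∫ r in a..b, f' r)
    (hlim : Filter.Tendsto f Filter.atTop (nhds 0)) {r : ℝ} (hr : 0 < r) :
    ‖f r‖ₑ ≤ ∫⁻ s in Ioi r, ‖f' s‖ₑ := by
  have h : Filter.Tendsto (fun b => ‖f b - f r‖ₑ) Filter.atTop (nhds ‖0 - f r‖ₑ) :=
    (hlim.sub_const _).enorm
  rw [zero_sub, enorm_neg] at h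
  refine le_of_tendsto h ?_
  filter_upwards [Filter.eventually_ge_atTop r] with b hb
  rw [hf r b hr hb, intervalIntegral.integral_of_le hb]
  exact (enorm_integral_le_lintegral_enorm _).trans (lintegral_mono_set Ioc_subset_Ioi_self)

/-- A function on `(0, ∞)` whose weighted square is integrable has absolute value almost
everywhere equal to a measurable function. -/
lemma exists_measurable_enorm_ae_eq {f' : ℝ → ℝ}
    (hint : IntegrableOn (fun r => r ^ 2 * (f' r) ^ 2) (Ioi 0)) :
    ∃ F : ℝ → ℝ≥0∞, Measurable F ∧ (fun s => ‖f' s‖ₑ) =ᵐ[volume.restrict (Ioi 0)] F := by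
  have hm : AEMeasurable (fun s => ‖f' s‖ₑ) (volume.restrict (Ioi (0 : ℝ))) := by
    have h : AEMeasurable (fun s : ℝ => ENNReal.ofReal (Real.sqrt (s ^ 2 * f' s ^ 2) / s))
        (volume.restrict (Ioi (0 : ℝ))) :=
      (hint.aestronglyMeasurable.aemeasurable.sqrt.div aemeasurable_id).ennreal_ofReal
    refine h.congr ?_
    filter_upwards [ae_restrict_mem measurableSet_Ioi] with s hs
    have hs0 : (0 : ℝ) < s := hs
    rw [← mul_pow, Real.sqrt_sq_eq_abs, abs_mul, abs_of_pos hs0, mul_div_cancel_left₀ _ hs0.ne',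
      ← Real.norm_eq_abs, ofReal_norm]
  exact ⟨hm.mk _, hm.measurable_mk, hm.ae_eq_mk⟩

/-- **Exterior `Y` norm of a static radial `Ḣ¹` function.** If `f` is locally absolutely
continuous on `(0,∞)` (encoded by the fundamental theorem of calculus with a locally
integrable derivative `f'`), `f(r) → 0` as `r → ∞` and `D = (∫_0^∞ r² f'(r)² dr)^{1/2} < ∞`,
then, viewing `f` as a time-independent function, `‖f‖_{Y(0,∞)} ≤ C·D`. -/
theorem Y_by_Hdot1 :
    ∃ C > 0, ∀ f f' : ℝ → ℝ,
      (∀ a b : ℝ, 0 < a → a ≤ b → IntervalIntegrable f' volume a b) →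
      (∀ a b : ℝ, 0 < a → a ≤ b → f b - f a = ∫ r in a..b, f' r) →
      Filter.Tendsto f Filter.atTop (nhds 0) →
      IntegrableOn (fun r => r ^ 2 * (f' r) ^ 2) (Ioi 0) →
      Yext (fun r _ => f r) 0
        ≤ C * Real.sqrt (∫ r in Ioi (0 : ℝ), r ^ 2 * (f' r) ^ 2) := by
  refine ⟨2, two_pos, fun f f' _ hf hlim hint => ?_⟩
  obtain ⟨F, hF, hFae⟩ := exists_measurable_enorm_ae_eq hint
  set D : ℝ := Real.sqrt (∫ r in Ioi (0 : ℝ), r ^ 2 * (f' r) ^ 2) with hD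
  have hD0 : 0 ≤ D := Real.sqrt_nonneg _
  set d : ℝ≥0∞ := ENNReal.ofReal D with hd
  have hK : ∫⁻ s in Ioi (0 : ℝ), ENNReal.ofReal (s ^ 2) * F s ^ 2 = d ^ 2 := by
    rw [hd, ← ENNReal.ofReal_pow hD0, hD, Real.sq_sqrt (integral_nonneg fun s => by positivity),
      ofReal_integral_eq_lintegral_ofReal hint (ae_of_all _ fun s => by positivity)]
    refine lintegral_congr_ae ?_
    filter_upwards [hFae] with s hs
    rw [← hs, ENNReal.ofReal_mul (sq_nonneg s), ← sq_abs (f' s),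
      ENNReal.ofReal_pow (abs_nonneg _), ← Real.norm_eq_abs, ofReal_norm]
  set H : ℝ → ℝ≥0∞ := fun r => ∫⁻ s in Ioi r, F s with hH
  have hHm : Measurable H :=
    Antitone.measurable fun a b hab => lintegral_mono_set (Ioi_subset_Ioi hab)
  have hfH : ∀ r, 0 < r → ‖f r‖ₑ ≤ H r := fun r hr =>
    (enorm_le_lintegral_Ioi hf hlim hr).trans_eq <| lintegral_congr_ae <|
      ae_restrict_of_ae_restrict_of_subset (Ioi_subset_Ioi hr.le) hFae
  have hG : ∀ t : ℝ, t ≠ 0 →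
      ‖Real.sqrt (∫ r in Ioi (|t| + 0), |f r| ^ 10 * r ^ 2)‖ₑ ≤ 2 * d ^ 3 * H |t| ^ 2 := by
    intro t ht
    have ht0 : 0 < |t| := abs_pos.2 ht
    rw [add_zero]
    refine (ENNReal.pow_le_pow_left_iff two_ne_zero).1 ?_
    have hnn : 0 ≤ ∫ r in Ioi |t|, |f r| ^ 10 * r ^ 2 := integral_nonneg fun r => by positivity
    calc ‖Real.sqrt (∫ r in Ioi |t|, |f r| ^ 10 * r ^ 2)‖ₑ ^ 2
        = ‖∫ r in Ioi |t|, |f r| ^ 10 * r ^ 2‖ₑ := by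
          rw [← enorm_pow, Real.sq_sqrt hnn]
      _ ≤ ∫⁻ r in Ioi |t|, ‖|f r| ^ 10 * r ^ 2‖ₑ := enorm_integral_le_lintegral_enorm _
      _ ≤ ∫⁻ r in Ioi |t|, H r ^ 10 * ENNReal.ofReal (r ^ 2) := by
          refine setLIntegral_mono' measurableSet_Ioi fun r hr => ?_
          rw [enorm_mul, enorm_pow, ← Real.norm_eq_abs, enorm_norm,
            Real.enorm_of_nonneg (sq_nonneg r)]
          gcongr
          exact hfH r (ht0.trans hr)
      _ ≤ 4 * (d ^ 2) ^ 3 * H |t| ^ 4 := lintegral_pow_ten_lintegral_Ioi_le F hF _ hK ht0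
      _ = (2 * d ^ 3 * H |t| ^ 2) ^ 2 := by ring
  have hmain : ‖∫ t : ℝ, Real.sqrt (∫ r in Ioi (|t| + 0), |f r| ^ 10 * r ^ 2)‖ₑ ≤ 16 * d ^ 5 := by
    calc _ ≤ ∫⁻ t : ℝ, ‖Real.sqrt (∫ r in Ioi (|t| + 0), |f r| ^ 10 * r ^ 2)‖ₑ :=
          enorm_integral_le_lintegral_enorm _
      _ ≤ ∫⁻ t : ℝ, 2 * d ^ 3 * H |t| ^ 2 := by
          refine lintegral_mono_ae ?_
          filter_upwards [Measure.ae_ne volume (0 : ℝ)] with t ht using hG t ht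
      _ = 2 * (2 * d ^ 3 * ∫⁻ t in Ioi (0 : ℝ), H t ^ 2) := by
          rw [lintegral_comp_abs_eq fun t => 2 * d ^ 3 * H t ^ 2,
            lintegral_const_mul _ (hHm.pow_const 2)]
      _ ≤ 2 * (2 * d ^ 3 * (4 * d ^ 2)) := by
          gcongr
          rw [← hK]
          exact lintegral_sq_lintegral_Ioi_le F hF
      _ = 16 * d ^ 5 := by ring
  have hI0 : 0 ≤ ∫ t : ℝ, Real.sqrt (∫ r in Ioi (|t| + 0), |f r| ^ 10 * r ^ 2) :=
    integral_nonneg fun t => Real.sqrt_nonneg _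
  have hreal : ∫ t : ℝ, Real.sqrt (∫ r in Ioi (|t| + 0), |f r| ^ 10 * r ^ 2) ≤ (2 * D) ^ 5 := by
    rw [Real.enorm_of_nonneg hI0, hd, ← ENNReal.ofReal_pow hD0,
      ← ENNReal.ofReal_ofNat, ← ENNReal.ofReal_mul (by norm_num),
      ENNReal.ofReal_le_ofReal_iff (by positivity)] at hmain
    have : 0 ≤ D ^ 5 := by positivity
    rw [mul_pow]
    linarith
  calc Yext (fun r _ => f r) 0 ≤ ((2 * D) ^ 5) ^ ((1 : ℝ) / 5) :=
        Real.rpow_le_rpow hI0 hreal (by norm_num)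
    _ = 2 * D := by
        rw [← Real.rpow_natCast, ← Real.rpow_mul (by positivity)]
        norm_num
end

section
/- Let γ > 0 and let F : (0,∞) × ℝ → ℝ be continuous and satisfy u·F(r,u) ≤ 0 (defocusing) and |F(r,u)| ≤ γ|u|⁵ for all r > 0 and u ∈ ℝ. Let α > 0, R₀ ≥ 0, and let w : (R₀,∞) → ℝ be twice continuously differentiable with w″(r) = −r·F(r, w(r)/r) for all r > R₀, lim_{r→∞} w(r) = α, and lim_{r→∞} w′(r) = 0. Then w(r) ≥ α and w′(r) ≤ 0 for every r > R₀. -/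
open Set

/-- A function with nonnegative derivative on a half-line stays below its limit at infinity. -/
theorem le_of_hasDerivAt_nonneg_of_tendsto_atTop {g g' : ℝ → ℝ} {R c : ℝ}
    (hg : ∀ r ∈ Ioi R, HasDerivAt g (g' r) r) (hg' : ∀ r ∈ Ioi R, 0 ≤ g' r)
    (hlim : Filter.Tendsto g Filter.atTop (nhds c)) : ∀ r ∈ Ioi R, g r ≤ c := by
  have hmono : MonotoneOn g (Ioi R) := by
    refine monotoneOn_of_deriv_nonneg (convex_Ioi R)
      (fun r hr => (hg r hr).continuousAt.continuousWithinAt) ?_ ?_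
    · rw [interior_Ioi]
      exact fun r hr => (hg r hr).differentiableAt.differentiableWithinAt
    · rw [interior_Ioi]
      intro r hr
      rw [(hg r hr).deriv]
      exact hg' r hr
  intro r hr
  refine ge_of_tendsto hlim ?_
  filter_upwards [Filter.eventually_ge_atTop r] with s hs
  exact hmono hr (lt_of_lt_of_le hr hs) hs

/-- **Monotonicity of non-radiative profiles for defocusing equations.** Let `F` be continuous
on `(0,∞) × ℝ`, defocusing (`u·F(r,u) ≤ 0`) and energy critical (`|F(r,u)| ≤ γ|u|⁵`). If
`w : (R₀,∞) → ℝ` is a C² solution of `w'' = -r·F(r, w/r)` with `w → α > 0` and `w' → 0` at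
infinity, then `w(r) ≥ α` and `w'(r) ≤ 0` for all `r > R₀`. -/
theorem defocusing_monotone (γ : ℝ) (hγ : 0 < γ) (F : ℝ → ℝ → ℝ)
    (hFc : ContinuousOn (Function.uncurry F) (Ioi (0 : ℝ) ×ˢ (univ : Set ℝ)))
    (hdef : ∀ r : ℝ, 0 < r → ∀ u : ℝ, u * F r u ≤ 0)
    (hbound : ∀ r : ℝ, 0 < r → ∀ u : ℝ, |F r u| ≤ γ * |u| ^ 5)
    (α R₀ : ℝ) (hα : 0 < α) (hR₀ : 0 ≤ R₀)
    (w w' : ℝ → ℝ)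
    (hw : ∀ r ∈ Ioi R₀, HasDerivAt w (w' r) r)
    (hw' : ∀ r ∈ Ioi R₀, HasDerivAt w' (-(r * F r (w r / r))) r)
    (hlim : Filter.Tendsto w Filter.atTop (nhds α))
    (hlim' : Filter.Tendsto w' Filter.atTop (nhds 0)) :
    ∀ r ∈ Ioi R₀, α ≤ w r ∧ w' r ≤ 0 := by
  have hpos : ∀ r ∈ Ioi R₀, 0 < r := fun r hr => lt_of_le_of_lt hR₀ hr
  have hww' : ∀ r ∈ Ioi R₀, w r * w' r ≤ 0 := by
    refine le_of_hasDerivAt_nonneg_of_tendsto_atTop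
      (fun r hr => (hw r hr).mul (hw' r hr)) (fun r hr => ?_) (by simpa using hlim.mul hlim')
    have hr0 := hpos r hr
    have h := mul_nonpos_of_nonneg_of_nonpos (sq_nonneg r) (hdef r hr0 (w r / r))
    have heq : r ^ 2 * (w r / r * F r (w r / r)) = w r * (r * F r (w r / r)) := by
      field_simp
    nlinarith [mul_self_nonneg (w' r)]
  have hsq : ∀ r ∈ Ioi R₀, α * α ≤ w r * w r := by
    intro r hr
    have h := le_of_hasDerivAt_nonneg_of_tendsto_atTop
      (fun r hr => ((hw r hr).mul (hw r hr)).neg)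
      (fun r hr => by linarith [hww' r hr, mul_comm (w r) (w' r)]) (hlim.mul hlim).neg r hr
    simpa using h
  have hwpos : ∀ r ∈ Ioi R₀, 0 < w r := by
    intro r hr
    by_contra! hneg
    obtain ⟨s, hs, hrs⟩ :=
      ((hlim.eventually (lt_mem_nhds hα)).and (Filter.eventually_ge_atTop r)).exists
    have hcont : ContinuousOn w (Ioi R₀) :=
      fun x hx => (hw x hx).continuousAt.continuousWithinAt
    obtain ⟨x, hx, hx0⟩ := isPreconnected_Ioi.intermediate_value hr
      (show s ∈ Ioi R₀ from lt_of_lt_of_le hr hrs) hcont ⟨hneg, hs.le⟩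
    have h := hsq x hx
    rw [hx0] at h
    nlinarith
  intro r hr
  have hwr := hwpos r hr
  exact ⟨by nlinarith [hsq r hr], by nlinarith [hww' r hr]⟩
end

section
/- There is an absolute constant C > 0 with the following property. Let γ > 0 and let F : (0,∞) × ℝ → ℝ be continuous and satisfy |F(r,u)| ≤ γ|u|⁵ and |F(r,u) − F(r,v)| ≤ γ|u−v|(|u|⁴+|v|⁴) for all r > 0 and u, v ∈ ℝ. Then for every α ≠ 0 and every R ≥ C γ^{1/2} α², there exists a unique continuous function w : [R,∞) → ℝ with sup_{r≥R} |w(r)| ≤ 2|α| satisfying the integral equation w(r) = α − ∫_r^∞ ∫_s^∞ τ·F(τ, w(τ)/τ) dτ ds for all r ≥ R. Moreover this w is twice differentiable, satisfies w″(r) = −r·F(r, w(r)/r) on (R,∞), and lim_{r→∞} w(r) = α, lim_{r→∞} w′(r) = 0. -/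
open Set MeasureTheory

section Tail

variable {R A p : ℝ} {h : ℝ → ℝ}

lemma integrableOn_Ioi_of_abs_le_rpow (hR : 0 < R) (hp : p < -1) (hc : ContinuousOn h (Ici R))
    (hb : ∀ t ∈ Ici R, |h t| ≤ A * t ^ p) : IntegrableOn h (Ioi R) := by
  refine Integrable.mono' ((integrableOn_Ioi_rpow_of_lt hp hR).const_mul A)
    ((hc.mono Ioi_subset_Ici_self).aestronglyMeasurable measurableSet_Ioi) ?_
  filter_upwards [ae_restrict_mem measurableSet_Ioi] with t ht
  exact hb t (Ioi_subset_Ici_self ht)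

lemma abs_integral_Ioi_le_rpow (hR : 0 < R) (hp : p < -1)
    (hb : ∀ t ∈ Ici R, |h t| ≤ A * t ^ p) {s : ℝ} (hs : s ∈ Ici R) :
    |∫ t in Ioi s, h t| ≤ A / (-(p + 1)) * s ^ (p + 1) := by
  have hs0 : 0 < s := hR.trans_le hs
  have key : ‖∫ t in Ioi s, h t‖ ≤ ∫ t in Ioi s, A * t ^ p := by
    refine norm_integral_le_of_norm_le ((integrableOn_Ioi_rpow_of_lt hp hs0).const_mul A) ?_
    filter_upwards [ae_restrict_mem measurableSet_Ioi] with t ht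
    exact hb t (le_trans (mem_Ici.1 hs) (le_of_lt ht))
  rw [integral_const_mul, integral_Ioi_rpow_of_lt hp hs0] at key
  refine key.trans_eq ?_
  have : p + 1 ≠ 0 := by linarith
  field_simp

lemma integral_Ioi_eq_sub_intervalIntegral (hi : IntegrableOn h (Ioi R)) {s : ℝ}
    (hs : s ∈ Ici R) : ∫ t in Ioi s, h t = (∫ t in Ioi R, h t) - ∫ t in R..s, h t := by
  rw [← intervalIntegral.integral_interval_add_Ioi hi (hi.mono_set (Ioi_subset_Ioi hs))]
  ring

lemma hasDerivAt_integral_Ioi (hi : IntegrableOn h (Ioi R)) (hc : ContinuousOn h (Ici R))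
    {s : ℝ} (hs : s ∈ Ioi R) : HasDerivAt (fun s => ∫ t in Ioi s, h t) (-h s) s := by
  have hs' : Ici R ∈ nhds s := Ici_mem_nhds hs
  have hd : HasDerivAt (fun s => ∫ t in R..s, h t) (h s) s := by
    refine intervalIntegral.integral_hasDerivAt_right ?_ ?_ (hc.continuousAt hs')
    · exact (intervalIntegrable_iff_integrableOn_Ioc_of_le (le_of_lt hs)).2
        (hi.mono_set Ioc_subset_Ioi_self)
    · exact ⟨Ioi R, Ioi_mem_nhds hs, hi.aestronglyMeasurable⟩
  refine (hd.const_sub (∫ t in Ioi R, h t)).congr_of_eventuallyEq ?_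
  filter_upwards [hs'] with x hx
  exact integral_Ioi_eq_sub_intervalIntegral hi hx

lemma continuousOn_integral_Ioi (hi : IntegrableOn h (Ioi R)) :
    ContinuousOn (fun s => ∫ t in Ioi s, h t) (Ici R) := by
  have hprim : ContinuousOn (fun s => ∫ t in R..s, h t) (Ici R) := by
    intro s hs
    have hs1 : R ≤ s + 1 := by linarith [mem_Ici.1 hs]
    have hcont := intervalIntegral.continuousOn_primitive_interval (a := R) (b := s + 1)
      (f := h) (μ := volume) (by
        rw [uIcc_of_le hs1, integrableOn_Icc_iff_integrableOn_Ioc]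
        exact hi.mono_set Ioc_subset_Ioi_self)
    rw [uIcc_of_le hs1] at hcont
    refine (hcont s ⟨hs, by linarith⟩).mono_of_mem_nhdsWithin ?_
    rw [← Ici_inter_Iic]
    exact Filter.inter_mem self_mem_nhdsWithin
      (mem_nhdsWithin_of_mem_nhds (Iic_mem_nhds (by linarith)))
  exact (continuousOn_const.sub hprim).congr fun s hs => integral_Ioi_eq_sub_intervalIntegral hi hs

lemma tendsto_integral_Ioi_of_abs_le_rpow (hR : 0 < R) (hp : p < -1)
    (hb : ∀ t ∈ Ici R, |h t| ≤ A * t ^ p) :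
    Filter.Tendsto (fun s => ∫ t in Ioi s, h t) Filter.atTop (nhds 0) := by
  have hlim : Filter.Tendsto (fun s : ℝ => A / (-(p + 1)) * s ^ (p + 1)) Filter.atTop (nhds 0) := by
    simpa using (tendsto_rpow_neg_atTop (y := -(p + 1)) (by linarith)).const_mul (A / (-(p + 1)))
  refine squeeze_zero_norm' ?_ hlim
  filter_upwards [Filter.Ici_mem_atTop R] with s hs
  exact abs_integral_Ioi_le_rpow hR hp hb hs

end Tail

section DoubleTail

variable {R A : ℝ} {h : ℝ → ℝ}

lemma abs_integral_Ioi_le_rpow_neg_three (hR : 0 < R)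
    (hb : ∀ t ∈ Ici R, |h t| ≤ A * t ^ (-4 : ℝ)) :
    ∀ s ∈ Ici R, |∫ t in Ioi s, h t| ≤ A / 3 * s ^ (-3 : ℝ) := by
  intro s hs
  have := abs_integral_Ioi_le_rpow hR (by norm_num) hb hs
  rwa [show (-4 + 1 : ℝ) = -3 by norm_num, neg_neg] at this

lemma integrableOn_integral_Ioi (hR : 0 < R) (hc : ContinuousOn h (Ici R))
    (hb : ∀ t ∈ Ici R, |h t| ≤ A * t ^ (-4 : ℝ)) :
    IntegrableOn (fun s => ∫ t in Ioi s, h t) (Ioi R) :=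
  integrableOn_Ioi_of_abs_le_rpow hR (by norm_num)
    (continuousOn_integral_Ioi (integrableOn_Ioi_of_abs_le_rpow hR (by norm_num) hc hb))
    (abs_integral_Ioi_le_rpow_neg_three hR hb)

lemma abs_integral_Ioi_integral_Ioi_le (hR : 0 < R)
    (hb : ∀ t ∈ Ici R, |h t| ≤ A * t ^ (-4 : ℝ)) {r : ℝ} (hr : r ∈ Ici R) :
    |∫ s in Ioi r, ∫ t in Ioi s, h t| ≤ A / (6 * R ^ 2) := by
  have hr0 : 0 < r := hR.trans_le hr
  have hA : 0 ≤ A :=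
    nonneg_of_mul_nonneg_left ((abs_nonneg _).trans (hb R self_mem_Ici)) (Real.rpow_pos_of_pos hR _)
  have hdecay := abs_integral_Ioi_le_rpow hR (by norm_num)
    (abs_integral_Ioi_le_rpow_neg_three hR hb) hr
  have hpow : r ^ (-3 + 1 : ℝ) = (r ^ 2)⁻¹ := by
    rw [show (-3 + 1 : ℝ) = -(2 : ℕ) by norm_num, Real.rpow_neg hr0.le, Real.rpow_natCast]
  rw [hpow] at hdecay
  calc _ ≤ _ := hdecay
    _ = A / (6 * r ^ 2) := by rw [show -(-3 + 1 : ℝ) = 2 by norm_num]; field_simp; ring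
    _ ≤ A / (6 * R ^ 2) := by
      have : R ≤ r := hr
      gcongr

end DoubleTail

section Source

/-- The right-hand side `τ ↦ τ F(τ, w(τ)/τ)` of the equation for `w(r) = r u(r)`. -/
noncomputable def radialSource (F : ℝ → ℝ → ℝ) (w : ℝ → ℝ) (τ : ℝ) : ℝ := τ * F τ (w τ / τ)

variable {γ R B K : ℝ} {F : ℝ → ℝ → ℝ} {w v : ℝ → ℝ}

lemma continuousOn_radialSource
    (hF : ContinuousOn (Function.uncurry F) (Ioi (0 : ℝ) ×ˢ (univ : Set ℝ))) (hR : 0 < R)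
    (hw : ContinuousOn w (Ici R)) : ContinuousOn (radialSource F w) (Ici R) := by
  have hpos : ∀ τ ∈ Ici R, 0 < τ := fun τ hτ => hR.trans_le hτ
  refine continuousOn_id.mul (hF.comp (f := fun τ => (τ, w τ / τ)) ?_ ?_)
  · exact continuousOn_id.prodMk (hw.div continuousOn_id fun τ hτ => (hpos τ hτ).ne')
  · exact fun τ hτ => ⟨hpos τ hτ, mem_univ _⟩

lemma rpow_neg_four {τ : ℝ} (hτ : 0 < τ) : τ ^ (-4 : ℝ) = (τ ^ 4)⁻¹ := by
  rw [show (-4 : ℝ) = -(4 : ℕ) by norm_num, Real.rpow_neg hτ.le, Real.rpow_natCast]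

lemma abs_radialSource_le (hγ : 0 < γ) (hgrow : ∀ r : ℝ, 0 < r → ∀ u : ℝ, |F r u| ≤ γ * |u| ^ 5)
    (hR : 0 < R) (hw : ∀ r ∈ Ici R, |w r| ≤ B) :
    ∀ τ ∈ Ici R, |radialSource F w τ| ≤ γ * B ^ 5 * τ ^ (-4 : ℝ) := by
  intro τ hτ
  have hτ0 : 0 < τ := hR.trans_le hτ
  rw [radialSource, abs_mul, abs_of_pos hτ0, rpow_neg_four hτ0]
  calc τ * |F τ (w τ / τ)| ≤ τ * (γ * |w τ / τ| ^ 5) := by gcongr; exact hgrow τ hτ0 _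
    _ ≤ τ * (γ * (B / τ) ^ 5) := by
      rw [abs_div, abs_of_pos hτ0]
      gcongr
      exact hw τ hτ
    _ = γ * B ^ 5 * (τ ^ 4)⁻¹ := by field_simp

lemma abs_radialSource_sub_le (hγ : 0 < γ)
    (hlip : ∀ r : ℝ, 0 < r → ∀ u v : ℝ, |F r u - F r v| ≤ γ * |u - v| * (|u| ^ 4 + |v| ^ 4))
    (hR : 0 < R) (hw : ∀ r ∈ Ici R, |w r| ≤ B) (hv : ∀ r ∈ Ici R, |v r| ≤ B)
    (hwv : ∀ r ∈ Ici R, |w r - v r| ≤ K) :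
    ∀ τ ∈ Ici R,
      |radialSource F w τ - radialSource F v τ| ≤ 2 * γ * B ^ 4 * K * τ ^ (-4 : ℝ) := by
  intro τ hτ
  have hτ0 : 0 < τ := hR.trans_le hτ
  have hK : 0 ≤ K := (abs_nonneg _).trans (hwv τ hτ)
  rw [radialSource, radialSource, ← mul_sub, abs_mul, abs_of_pos hτ0, rpow_neg_four hτ0]
  calc τ * |F τ (w τ / τ) - F τ (v τ / τ)|
      ≤ τ * (γ * |w τ / τ - v τ / τ| * (|w τ / τ| ^ 4 + |v τ / τ| ^ 4)) := by
        gcongr; exact hlip τ hτ0 _ _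
    _ ≤ τ * (γ * (K / τ) * ((B / τ) ^ 4 + (B / τ) ^ 4)) := by
      rw [← sub_div, abs_div, abs_div, abs_div, abs_of_pos hτ0]
      gcongr
      · exact hwv τ hτ
      · exact hw τ hτ
      · exact hv τ hτ
    _ = 2 * γ * B ^ 4 * K * (τ ^ 4)⁻¹ := by field_simp; ring

/-- The double integral of the source depends on `w` in a Lipschitz way, in the supremum norm. -/
lemma abs_integral_radialSource_sub_le (hγ : 0 < γ)
    (hF : ContinuousOn (Function.uncurry F) (Ioi (0 : ℝ) ×ˢ (univ : Set ℝ)))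
    (hgrow : ∀ r : ℝ, 0 < r → ∀ u : ℝ, |F r u| ≤ γ * |u| ^ 5)
    (hlip : ∀ r : ℝ, 0 < r → ∀ u v : ℝ, |F r u - F r v| ≤ γ * |u - v| * (|u| ^ 4 + |v| ^ 4))
    (hR : 0 < R) (hwc : ContinuousOn w (Ici R)) (hvc : ContinuousOn v (Ici R))
    (hw : ∀ r ∈ Ici R, |w r| ≤ B) (hv : ∀ r ∈ Ici R, |v r| ≤ B)
    (hwv : ∀ r ∈ Ici R, |w r - v r| ≤ K) {r : ℝ} (hr : r ∈ Ici R) :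
    |(∫ s in Ioi r, ∫ τ in Ioi s, radialSource F w τ) -
      ∫ s in Ioi r, ∫ τ in Ioi s, radialSource F v τ| ≤ 2 * γ * B ^ 4 * K / (6 * R ^ 2) := by
  have hgwc := continuousOn_radialSource hF hR hwc
  have hgvc := continuousOn_radialSource hF hR hvc
  have hgw := abs_radialSource_le hγ hgrow hR hw
  have hgv := abs_radialSource_le hγ hgrow hR hv
  have hiw := integrableOn_Ioi_of_abs_le_rpow hR (by norm_num) hgwc hgw
  have hiv := integrableOn_Ioi_of_abs_le_rpow hR (by norm_num) hgvc hgv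
  have hsub : (∫ s in Ioi r, ∫ τ in Ioi s, radialSource F w τ) -
      (∫ s in Ioi r, ∫ τ in Ioi s, radialSource F v τ) =
      ∫ s in Ioi r, ∫ τ in Ioi s, (radialSource F w τ - radialSource F v τ) := by
    rw [← integral_sub
      ((integrableOn_integral_Ioi hR hgwc hgw).mono_set (Ioi_subset_Ioi hr))
      ((integrableOn_integral_Ioi hR hgvc hgv).mono_set (Ioi_subset_Ioi hr))]
    refine setIntegral_congr_fun measurableSet_Ioi fun s hs => ?_
    have hRs : R ≤ s := le_trans hr (le_of_lt hs)
    exact (integral_sub (hiw.mono_set (Ioi_subset_Ioi hRs))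
      (hiv.mono_set (Ioi_subset_Ioi hRs))).symm
  rw [hsub]
  exact abs_integral_Ioi_integral_Ioi_le hR (abs_radialSource_sub_le hγ hlip hR hw hv hwv) hr

end Source

section FixedPoint

open scoped BoundedContinuousFunction NNReal

variable {γ α R : ℝ} {F : ℝ → ℝ → ℝ}

/-- Existence of a globally defined continuous solution of the integral equation on `[R, ∞)`,
obtained from the contraction principle for the equation with `w` truncated to
`[-2|α|, 2|α|]`. -/
lemma exists_radial_solution (hγ : 0 < γ)
    (hF : ContinuousOn (Function.uncurry F) (Ioi (0 : ℝ) ×ˢ (univ : Set ℝ)))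
    (hgrow : ∀ r : ℝ, 0 < r → ∀ u : ℝ, |F r u| ≤ γ * |u| ^ 5)
    (hlip : ∀ r : ℝ, 0 < r → ∀ u v : ℝ, |F r u - F r v| ≤ γ * |u - v| * (|u| ^ 4 + |v| ^ 4))
    (hR : 0 < R) (hsize : 16 * γ * α ^ 4 ≤ R ^ 2) :
    ∃ w : ℝ → ℝ, Continuous w ∧ (∀ r, |w r| ≤ 2 * |α|) ∧
      ∀ r ∈ Ici R, w r = α - ∫ s in Ioi r, ∫ τ in Ioi s, radialSource F w τ := by
  have hα4 : |α| ^ 4 = α ^ 4 := by rw [← abs_pow, abs_of_nonneg (by positivity)]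
  have hB : -(2 * |α|) ≤ 2 * |α| := by linarith [abs_nonneg α]
  set c : (ℝ → ℝ) → ℝ → ℝ := fun v r => projIcc (-(2 * |α|)) (2 * |α|) hB (v r)
  have hcabs : ∀ v r, |c v r| ≤ 2 * |α| := fun v r =>
    abs_le.2 (projIcc (-(2 * |α|)) (2 * |α|) hB (v r)).2
  have hccont : ∀ v : ℝ → ℝ, Continuous v → Continuous (c v) := fun v hv =>
    continuous_subtype_val.comp (continuous_projIcc.comp hv)
  have hmem : ∀ r, max R r ∈ Ici R := fun r => le_max_left R r
  set T : (ℝ → ℝ) → ℝ → ℝ := fun v r =>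
    α - ∫ s in Ioi (max R r), ∫ τ in Ioi s, radialSource F (c v) τ with hT
  have hTcont : ∀ v : ℝ → ℝ, Continuous v → Continuous (T v) := by
    intro v hv
    have h := continuousOn_integral_Ioi (integrableOn_integral_Ioi hR
      (continuousOn_radialSource hF hR (hccont v hv).continuousOn)
      (abs_radialSource_le hγ hgrow hR fun r _ => hcabs v r))
    exact continuous_const.sub (h.comp_continuous (continuous_const.max continuous_id) hmem)
  have hTabs : ∀ v r, |T v r| ≤ 2 * |α| := by
    intro v r
    have h := abs_integral_Ioi_integral_Ioi_le hR
      (abs_radialSource_le hγ hgrow hR fun r _ => hcabs v r) (hmem r)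
    have hle : γ * (2 * |α|) ^ 5 / (6 * R ^ 2) ≤ |α| := by
      rw [div_le_iff₀ (by positivity)]
      calc γ * (2 * |α|) ^ 5 = |α| * (32 * γ * α ^ 4) := by rw [← hα4]; ring
        _ ≤ |α| * (6 * R ^ 2) := by
          have : 0 ≤ γ * α ^ 4 := by positivity
          exact mul_le_mul_of_nonneg_left (by linarith) (abs_nonneg α)
    calc |T v r| ≤ |α| + _ := abs_sub _ _
      _ ≤ 2 * |α| := by linarith
  let Φ : (ℝ →ᵇ ℝ) → (ℝ →ᵇ ℝ) := fun v =>
    BoundedContinuousFunction.ofNormedAddCommGroup (T v) (hTcont v v.continuous) (2 * |α|)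
      (hTabs v)
  have hΦ : ContractingWith (1 / 3 : ℝ≥0) Φ := by
    refine ⟨by rw [div_lt_one] <;> norm_num, LipschitzWith.of_dist_le_mul fun u v => ?_⟩
    refine (BoundedContinuousFunction.dist_le (by positivity)).2 fun r => ?_
    have h := abs_integral_radialSource_sub_le hγ hF hgrow hlip hR
      (hccont v v.continuous).continuousOn (hccont u u.continuous).continuousOn
      (fun r _ => hcabs v r) (fun r _ => hcabs u r) (K := dist u v)
      (fun r _ => (abs_projIcc_sub_projIcc hB).trans (by
        rw [dist_comm, ← Real.dist_eq]; exact BoundedContinuousFunction.dist_coe_le_dist r)) (hmem r)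
    have hle : 2 * γ * (2 * |α|) ^ 4 * dist u v / (6 * R ^ 2) ≤ 1 / 3 * dist u v := by
      rw [div_le_iff₀ (by positivity)]
      calc 2 * γ * (2 * |α|) ^ 4 * dist u v = 2 * (16 * γ * α ^ 4) * dist u v := by
            rw [← hα4]; ring
        _ ≤ 2 * R ^ 2 * dist u v := by gcongr
        _ = _ := by ring
    have heq : dist (Φ u r) (Φ v r) = |(∫ s in Ioi (max R r), ∫ τ in Ioi s,
        radialSource F (c v) τ) - ∫ s in Ioi (max R r), ∫ τ in Ioi s,
        radialSource F (c u) τ| := by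
      rw [Real.dist_eq]
      exact congrArg _ (sub_sub_sub_cancel_left _ _ α)
    rw [heq]
    exact (h.trans hle).trans_eq (by norm_num)
  obtain ⟨w, hw⟩ : ∃ w : ℝ →ᵇ ℝ, Φ w = w := ⟨_, hΦ.fixedPoint_isFixedPt⟩
  have hwT : ∀ r, w r = T w r := fun r => (DFunLike.congr_fun hw r).symm
  have hwabs : ∀ r, |w r| ≤ 2 * |α| := fun r => by rw [hwT]; exact hTabs w r
  have hcw : c w = w := by
    funext r
    exact congrArg Subtype.val (projIcc_of_mem hB (abs_le.1 (hwabs r)))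
  refine ⟨w, w.continuous, hwabs, fun r hr => ?_⟩
  rw [hwT r]
  simp only [hT, hcw, max_eq_right (mem_Ici.1 hr)]

/-- Two bounded continuous solutions of the integral equation agree on `[R, ∞)`. -/
lemma radial_solution_unique (hγ : 0 < γ)
    (hF : ContinuousOn (Function.uncurry F) (Ioi (0 : ℝ) ×ˢ (univ : Set ℝ)))
    (hgrow : ∀ r : ℝ, 0 < r → ∀ u : ℝ, |F r u| ≤ γ * |u| ^ 5)
    (hlip : ∀ r : ℝ, 0 < r → ∀ u v : ℝ, |F r u - F r v| ≤ γ * |u - v| * (|u| ^ 4 + |v| ^ 4))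
    (hR : 0 < R) (hsize : 16 * γ * α ^ 4 ≤ R ^ 2) {w v : ℝ → ℝ}
    (hwc : ContinuousOn w (Ici R)) (hvc : ContinuousOn v (Ici R))
    (hw : ∀ r ∈ Ici R, |w r| ≤ 2 * |α|) (hv : ∀ r ∈ Ici R, |v r| ≤ 2 * |α|)
    (hweq : ∀ r ∈ Ici R, w r = α - ∫ s in Ioi r, ∫ τ in Ioi s, radialSource F w τ)
    (hveq : ∀ r ∈ Ici R, v r = α - ∫ s in Ioi r, ∫ τ in Ioi s, radialSource F v τ) :
    ∀ r ∈ Ici R, w r = v r := by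
  have hα4 : |α| ^ 4 = α ^ 4 := by rw [← abs_pow, abs_of_nonneg (by positivity)]
  have hiter : ∀ n : ℕ, ∀ r ∈ Ici R, |w r - v r| ≤ 4 * |α| * (1 / 3) ^ n := by
    intro n
    induction n with
    | zero =>
      intro r hr
      have := abs_sub (w r) (v r)
      linarith [hw r hr, hv r hr]
    | succ n ih =>
      intro r hr
      have h := abs_integral_radialSource_sub_le hγ hF hgrow hlip hR hwc hvc hw hv ih hr
      rw [hweq r hr, hveq r hr, sub_sub_sub_cancel_left, abs_sub_comm]
      refine h.trans ?_
      rw [div_le_iff₀ (by positivity)]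
      calc 2 * γ * (2 * |α|) ^ 4 * (4 * |α| * (1 / 3) ^ n)
          = 2 * (16 * γ * α ^ 4) * (4 * |α| * (1 / 3) ^ n) := by rw [← hα4]; ring
        _ ≤ 2 * R ^ 2 * (4 * |α| * (1 / 3) ^ n) := by gcongr
        _ = 4 * |α| * (1 / 3) ^ (n + 1) * (6 * R ^ 2) := by ring
  intro r hr
  have hlim : Filter.Tendsto (fun n : ℕ => 4 * |α| * (1 / 3 : ℝ) ^ n) Filter.atTop (nhds 0) := by
    simpa using (tendsto_pow_atTop_nhds_zero_of_lt_one (r := (1 / 3 : ℝ)) (by norm_num)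
      (by norm_num)).const_mul (4 * |α|)
  have hle : |w r - v r| ≤ 0 := ge_of_tendsto' hlim fun n => hiter n r hr
  exact sub_eq_zero.1 (abs_nonpos_iff.1 hle)

end FixedPoint

/-- **Construction of non-radiative profiles by ODE fixed point.** Under the energy critical
bounds on `F`, for every `α ≠ 0` and `R ≥ C γ^{1/2} α²` there is a unique continuous
`w : [R,∞) → ℝ` with `|w| ≤ 2|α|` solving the integral equation
`w(r) = α - ∫_r^∞ ∫_s^∞ τ·F(τ, w(τ)/τ) dτ ds`; moreover `w` is twice differentiable with
`w'' = -r·F(r, w/r)` on `(R,∞)`, `w → α` and `w' → 0` at infinity. -/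
theorem ode_fixed_point :
    ∃ C > 0, ∀ γ : ℝ, 0 < γ → ∀ F : ℝ → ℝ → ℝ,
      ContinuousOn (Function.uncurry F) (Ioi (0 : ℝ) ×ˢ (univ : Set ℝ)) →
      (∀ r : ℝ, 0 < r → ∀ u : ℝ, |F r u| ≤ γ * |u| ^ 5) →
      (∀ r : ℝ, 0 < r → ∀ u v : ℝ, |F r u - F r v| ≤ γ * |u - v| * (|u| ^ 4 + |v| ^ 4)) →
      ∀ α : ℝ, α ≠ 0 → ∀ R : ℝ, C * Real.sqrt γ * α ^ 2 ≤ R →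
      ∃ w : ℝ → ℝ,
        (ContinuousOn w (Ici R) ∧ (∀ r ∈ Ici R, |w r| ≤ 2 * |α|) ∧
          ∀ r ∈ Ici R, w r = α - ∫ s in Ioi r, ∫ τ in Ioi s, τ * F τ (w τ / τ)) ∧
        (∀ w₂ : ℝ → ℝ,
          (ContinuousOn w₂ (Ici R) ∧ (∀ r ∈ Ici R, |w₂ r| ≤ 2 * |α|) ∧
            ∀ r ∈ Ici R, w₂ r = α - ∫ s in Ioi r, ∫ τ in Ioi s, τ * F τ (w₂ τ / τ)) →
          ∀ r ∈ Ici R, w₂ r = w r) ∧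
        ∃ w' : ℝ → ℝ,
          (∀ r ∈ Ioi R, HasDerivAt w (w' r) r) ∧
          (∀ r ∈ Ioi R, HasDerivAt w' (-(r * F r (w r / r))) r) ∧
          Filter.Tendsto w Filter.atTop (nhds α) ∧
          Filter.Tendsto w' Filter.atTop (nhds 0) := by
  refine ⟨4, by norm_num, fun γ hγ F hF hgrow hlip α hα R hCR => ?_⟩
  have hlow : 0 < 4 * Real.sqrt γ * α ^ 2 := by positivity
  have hR : 0 < R := hlow.trans_le hCR
  have hsize : 16 * γ * α ^ 4 ≤ R ^ 2 := by
    calc 16 * γ * α ^ 4 = (4 * Real.sqrt γ * α ^ 2) ^ 2 := by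
          rw [mul_pow, mul_pow, Real.sq_sqrt hγ.le]; ring
      _ ≤ R ^ 2 := by gcongr
  obtain ⟨w, hwc, hwb, hweq⟩ := exists_radial_solution hγ hF hgrow hlip hR hsize
  have hgc := continuousOn_radialSource hF hR hwc.continuousOn
  have hgb := abs_radialSource_le hγ hgrow hR fun r _ => hwb r
  have hgi := integrableOn_Ioi_of_abs_le_rpow hR (by norm_num) hgc hgb
  refine ⟨w, ⟨hwc.continuousOn, fun r _ => hwb r, hweq⟩, ?_,
    fun r => ∫ τ in Ioi r, radialSource F w τ, ?_, ?_, ?_, ?_⟩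
  · rintro w₂ ⟨hw₂c, hw₂b, hw₂eq⟩
    exact radial_solution_unique hγ hF hgrow hlip hR hsize hw₂c hwc.continuousOn hw₂b
      (fun r _ => hwb r) hw₂eq hweq
  · intro r hr
    have hd := (hasDerivAt_integral_Ioi (integrableOn_integral_Ioi hR hgc hgb)
      (continuousOn_integral_Ioi hgi) hr).const_sub α
    rw [neg_neg] at hd
    refine hd.congr_of_eventuallyEq ?_
    filter_upwards [Ici_mem_nhds hr] with x hx using hweq x hx
  · exact fun r hr => hasDerivAt_integral_Ioi hgi hgc hr
  · have hlim := (tendsto_integral_Ioi_of_abs_le_rpow hR (by norm_num)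
      (abs_integral_Ioi_le_rpow_neg_three hR hgb)).const_sub α
    rw [sub_zero] at hlim
    refine hlim.congr' ?_
    filter_upwards [Filter.Ici_mem_atTop R] with x hx using (hweq x hx).symm
  · exact tendsto_integral_Ioi_of_abs_le_rpow hR (by norm_num) hgb
end

section
/- Let (b_k)_{k≥0} be a nonnegative sequence with ∑_{k=0}^∞ b_k⁴ < ∞, let (y_k)_{k≥0} be a nonnegative nonincreasing sequence, and let C > 0, D ≥ 0 be constants such that for every k ≥ 0 one has y_k ≤ C ( 2^{−k/2} D + ∑_{j=0}^{k−1} 2^{−(k−j)/2} b_j⁴ y_j + ∑_{j≥k} b_j⁴ y_j ). Then there exists a constant C′ > 0 (depending on C, D, (b_k) and y₀) such that y_k ≤ C′ 2^{−k/2} for all k ≥ 0. -/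
/-- Discrete Grönwall inequality: a sequence bounded by a constant plus a weighted sum of its
previous terms is bounded by the constant times the exponential of the sum of the weights. -/
theorem le_mul_exp_sum_of_le_add_sum {z c : ℕ → ℝ} {M : ℝ} (hM : 0 ≤ M)
    (hc : ∀ k, 0 ≤ c k) (h : ∀ k, z k ≤ M + ∑ j ∈ Finset.range k, c j * z j) (k : ℕ) :
    z k ≤ M * Real.exp (∑ j ∈ Finset.range k, c j) := by
  refine (h k).trans ?_
  induction k with
  | zero => simp
  | succ k ih =>
    rw [Finset.sum_range_succ, Finset.sum_range_succ, Real.exp_add]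
    calc M + (∑ j ∈ Finset.range k, c j * z j + c k * z k)
        ≤ (M + ∑ j ∈ Finset.range k, c j * z j) * (c k + 1) := by
          linarith [mul_le_mul_of_nonneg_left (h k) (hc k)]
      _ ≤ M * Real.exp (∑ j ∈ Finset.range k, c j) * (c k + 1) :=
          mul_le_mul_of_nonneg_right ih (by linarith [hc k])
      _ ≤ M * Real.exp (∑ j ∈ Finset.range k, c j) * Real.exp (c k) :=
          mul_le_mul_of_nonneg_left (Real.add_one_le_exp _) (mul_nonneg hM (Real.exp_nonneg _))
      _ = _ := mul_assoc _ _ _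

/-- For a nonincreasing sequence `y` and nonnegative summable weights `a`, the weighted tail sum
of `y` from `k` on is at most `y k` times the tail sum of the weights. -/
theorem tsum_tail_mul_le_of_antitone {a y : ℕ → ℝ} (ha : ∀ k, 0 ≤ a k) (hy : ∀ k, 0 ≤ y k)
    (hsum : Summable a) (hanti : Antitone y) (k : ℕ) :
    ∑' j, a (k + j) * y (k + j) ≤ (∑' j, a (k + j)) * y k := by
  have hs : Summable fun j => a (k + j) * y k :=
    (hsum.comp_injective (add_right_injective k)).mul_right (y k)
  have hle (j : ℕ) : a (k + j) * y (k + j) ≤ a (k + j) * y k :=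
    mul_le_mul_of_nonneg_left (hanti (Nat.le_add_right k j)) (ha _)
  rw [← tsum_mul_right]
  exact (hs.of_nonneg_of_le (fun j => mul_nonneg (ha _) (hy _)) hle).tsum_le_tsum hle hs

/-- **Absorption-and-iteration sequence lemma.** If `(b_k)` is nonnegative with `∑ b_k⁴ < ∞`,
`(y_k)` is nonnegative and nonincreasing, and
`y_k ≤ C (2^{-k/2} D + ∑_{j<k} 2^{-(k-j)/2} b_j⁴ y_j + ∑_{j≥k} b_j⁴ y_j)` for all `k`,
then `y_k ≤ C' 2^{-k/2}` for all `k`. -/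
theorem absorption_sequence_lemma (b y : ℕ → ℝ)
    (hb : ∀ k, 0 ≤ b k) (hy : ∀ k, 0 ≤ y k)
    (hsum : Summable (fun k => b k ^ 4))
    (hmono : ∀ k, y (k + 1) ≤ y k)
    (C D : ℝ) (hC : 0 < C) (hD : 0 ≤ D)
    (hrec : ∀ k : ℕ, y k ≤ C * ((2 : ℝ) ^ (-(k : ℝ) / 2) * D
        + ∑ j ∈ Finset.range k, (2 : ℝ) ^ (-((k : ℝ) - (j : ℝ)) / 2) * b j ^ 4 * y j
        + ∑' j : ℕ, b (k + j) ^ 4 * y (k + j))) :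
    ∃ C' > 0, ∀ k : ℕ, y k ≤ C' * (2 : ℝ) ^ (-(k : ℝ) / 2) := by
  have ha (k : ℕ) : 0 ≤ b k ^ 4 := pow_nonneg (hb k) 4
  have hanti : Antitone y := antitone_nat_of_succ_le hmono
  set r : ℕ → ℝ := fun k => (2 : ℝ) ^ (-(k : ℝ) / 2) with hr
  have hr_pos (k : ℕ) : 0 < r k := Real.rpow_pos_of_pos two_pos _
  have hr_div (k j : ℕ) : (2 : ℝ) ^ (-((k : ℝ) - (j : ℝ)) / 2) = r k / r j := by
    rw [hr, ← Real.rpow_sub two_pos]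
    congr 1
    ring
  have hz (k : ℕ) : 0 ≤ y k / r k := div_nonneg (hy k) (hr_pos k).le
  obtain ⟨K, hK⟩ : ∃ K, ∀ k ≥ K, C * ∑' j, b (k + j) ^ 4 ≤ 1 / 2 := by
    have ht := (tendsto_sum_nat_add fun k => b k ^ 4).const_mul C
    rw [mul_zero] at ht
    obtain ⟨K, hK⟩ := Filter.eventually_atTop.1 (ht.eventually_le_const one_half_pos)
    refine ⟨K, fun k hk => ?_⟩
    simpa only [add_comm k] using hK k hk
  set M := 2 * C * D + ∑ j ∈ Finset.range K, y j / r j + 1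
  have hM : 0 < M := by
    have := Finset.sum_nonneg fun j (_ : j ∈ Finset.range K) => hz j
    positivity
  have hc (k : ℕ) : 0 ≤ 2 * C * b k ^ 4 := mul_nonneg (by positivity) (ha k)
  have hgron (k : ℕ) :
      y k / r k ≤ M + ∑ j ∈ Finset.range k, 2 * C * b j ^ 4 * (y j / r j) := by
    rcases lt_or_ge k K with hk | hk
    · have h1 := Finset.single_le_sum (fun j _ => hz j) (Finset.mem_range.2 hk)
      have h2 := Finset.sum_nonneg fun j (_ : j ∈ Finset.range k) => mul_nonneg (hc j) (hz j)
      have h3 : 0 ≤ 2 * C * D := by positivity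
      linarith
    · have htail := mul_le_mul_of_nonneg_left
        (tsum_tail_mul_le_of_antitone ha hy hsum hanti k) hC.le
      have habsorb := mul_le_mul_of_nonneg_right (hK k hk) (hy k)
      have hhead : ∑ j ∈ Finset.range k, (2 : ℝ) ^ (-((k : ℝ) - (j : ℝ)) / 2) * b j ^ 4 * y j
          = r k * ∑ j ∈ Finset.range k, b j ^ 4 * (y j / r j) := by
        rw [Finset.mul_sum]
        refine Finset.sum_congr rfl fun j _ => ?_
        rw [hr_div]
        ring
      have hk_rec := hrec k
      rw [hhead] at hk_rec
      have hbound : y k ≤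
          (2 * C * D + 2 * C * ∑ j ∈ Finset.range k, b j ^ 4 * (y j / r j)) * r k := by
        linarith
      have hfirst := Finset.sum_nonneg fun j (_ : j ∈ Finset.range K) => hz j
      have hdiv := (div_le_iff₀ (hr_pos k)).2 hbound
      simp only [mul_assoc (2 * C), ← Finset.mul_sum]
      linarith
  refine ⟨M * Real.exp (∑' j, 2 * C * b j ^ 4), by positivity, fun k => ?_⟩
  rw [← div_le_iff₀ (hr_pos k)]
  refine (le_mul_exp_sum_of_le_add_sum hM.le hc hgron k).trans ?_
  gcongr
  exact (hsum.mul_left (2 * C)).sum_le_tsum _ fun j _ => hc j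
end

section
/- Let γ > 0 and let F : (0,∞) × ℝ → ℝ be continuous with |F(r,u)| ≤ γ|u|⁵ for all r > 0, u ∈ ℝ. There exists a constant c* > 0 (depending only on γ) with the following property: if r₀ > 0, 0 < c₀ ≤ c*, and w : (0, r₀] → ℝ is twice continuously differentiable with w″(r) = −r·F(r, w(r)/r) for all r ∈ (0, r₀], |w(r)| ≤ 2 c₀ r^{1/2} for all r ∈ (0, r₀], and |w′(r₀)| ≤ c₀ r₀^{−1/2}, then w′(r) converges to a finite limit κ as r → 0⁺, and there exists a constant C > 0 such that |w(r) − κ r| ≤ C r³ for all r ∈ (0, r₀]. -/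
open Set

open Filter Topology

/-- A function with derivative dominated by that of `g` near the left endpoint, where `g → 0`,
has a limit there, and its distance to the limit is at most `g`. -/
lemma exists_tendsto_of_abs_deriv_le {f f' g g' : ℝ → ℝ} {b : ℝ} (hb : 0 < b)
    (hf : ∀ r ∈ Ioc 0 b, HasDerivWithinAt f (f' r) (Ioc 0 b) r)
    (hg : ∀ r ∈ Ioc 0 b, HasDerivAt g (g' r) r)
    (hfg : ∀ r ∈ Ioc 0 b, |f' r| ≤ g' r)
    (hg0 : Tendsto g (𝓝[>] 0) (𝓝 0)) :
    ∃ l, Tendsto f (𝓝[>] 0) (𝓝 l) ∧ ∀ r ∈ Ioc 0 b, |f r - l| ≤ g r := by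
  have mono : ∀ σ : ℝ, |σ| ≤ 1 → MonotoneOn (fun r => g r + σ * f r) (Ioc 0 b) := by
    intro σ hσ
    have hd : ∀ r ∈ Ioc 0 b,
        HasDerivWithinAt (fun r => g r + σ * f r) (g' r + σ * f' r) (Ioc 0 b) r :=
      fun r hr => (hg r hr).hasDerivWithinAt.add ((hf r hr).const_mul σ)
    refine monotoneOn_of_hasDerivWithinAt_nonneg (f' := fun r => g' r + σ * f' r)
      (convex_Ioc 0 b) (fun r hr => (hd r hr).continuousWithinAt)
      (fun r hr => (hd r (interior_subset hr)).mono interior_subset) fun r hr => ?_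
    have h := hfg r (interior_subset hr)
    have : |σ * f' r| ≤ |f' r| := by
      rw [abs_mul]
      exact mul_le_of_le_one_left (abs_nonneg _) hσ
    linarith [neg_abs_le (σ * f' r)]
  have key : ∀ x ∈ Ioc 0 b, ∀ y ∈ Ioc 0 b, x ≤ y → |f y - f x| ≤ g y - g x := by
    intro x hx y hy hxy
    have h₁ := mono 1 (by simp) hx hy hxy
    have h₂ := mono (-1) (by simp) hx hy hxy
    simp only at h₁ h₂
    rw [abs_le]
    constructor <;> linarith
  have hmem : ∀ᶠ r in 𝓝[>] (0 : ℝ), r ∈ Ioc 0 b := Ioc_mem_nhdsGT hb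
  have hcauchy : Cauchy (map f (𝓝[>] 0)) := by
    rw [cauchy_map_iff]
    refine ⟨inferInstance, ?_⟩
    rw [Metric.uniformity_basis_dist.tendsto_right_iff]
    intro ε hε
    have hsmall : ∀ᶠ r in 𝓝[>] (0 : ℝ), |g r| < ε / 2 := by
      simpa [Real.dist_eq] using (Metric.tendsto_nhds.1 hg0) (ε / 2) (by positivity)
    have h := hmem.and hsmall
    filter_upwards [h.prod_mk h] with p hp
    obtain ⟨⟨hx, hgx⟩, hy, hgy⟩ := hp
    simp only [Real.dist_eq]
    rw [abs_lt] at hgx hgy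
    rcases le_total p.1 p.2 with hle | hle
    · rw [abs_sub_comm]
      linarith [key _ hx _ hy hle]
    · linarith [key _ hy _ hx hle]
  obtain ⟨l, hl⟩ := CompleteSpace.complete hcauchy
  have hl : Tendsto f (𝓝[>] 0) (𝓝 l) := hl
  refine ⟨l, hl, fun r hr => ?_⟩
  have h₁ : Tendsto (fun x => |f r - f x|) (𝓝[>] 0) (𝓝 |f r - l|) :=
    (tendsto_const_nhds.sub hl).abs
  have h₂ : Tendsto (fun x => g r - g x) (𝓝[>] 0) (𝓝 (g r - 0)) := tendsto_const_nhds.sub hg0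
  rw [sub_zero] at h₂
  refine le_of_tendsto_of_tendsto h₁ h₂ ?_
  filter_upwards [Ioc_mem_nhdsGT hr.1] with x hx
  exact key x ⟨hx.1, hx.2.trans hr.2⟩ r hr hx.2

/-- At a point `x` where a function has a local maximum, its second derivative is nonpositive. -/
lemma IsLocalMax.second_deriv_nonpos {h h' : ℝ → ℝ} {d x : ℝ} (hmax : IsLocalMax h x)
    (hh : ∀ᶠ r in 𝓝 x, HasDerivAt h (h' r) r) (hh' : HasDerivAt h' d x) : d ≤ 0 := by
  by_contra! hd
  have hderiv : deriv h =ᶠ[𝓝 x] h' := hh.mono fun r hr => hr.deriv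
  have hdd : deriv (deriv h) x = d := hderiv.deriv_eq.trans hh'.deriv
  have hmin : IsLocalMin h x := isLocalMin_of_deriv_deriv_pos (by rwa [hdd])
    hmax.deriv_eq_zero hh.self_of_nhds.continuousAt
  have hconst : h =ᶠ[𝓝 x] fun _ => h x := by
    filter_upwards [hmax, hmin] with y h₁ h₂ using le_antisymm h₁ h₂
  have hzero : deriv (deriv h) x = 0 := by
    rw [hconst.deriv.deriv_eq]
    simp
  linarith

/-- The barrier `δ r^{1/4} + A r^{3/4}` solves `ψ'' = -(3/16) r⁻² ψ`. -/
lemma hasDerivAt_barrier (δ A : ℝ) {r : ℝ} (hr : 0 < r) :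
    HasDerivAt (fun r : ℝ => δ * r ^ (1 / 4 : ℝ) + A * r ^ (3 / 4 : ℝ))
      (δ * ((1 / 4) * r ^ (-3 / 4 : ℝ)) + A * ((3 / 4) * r ^ (-1 / 4 : ℝ))) r ∧
    HasDerivAt (fun r : ℝ =>
      δ * ((1 / 4) * r ^ (-3 / 4 : ℝ)) + A * ((3 / 4) * r ^ (-1 / 4 : ℝ)))
      (-(3 / 16) * (δ * r ^ (1 / 4 : ℝ) + A * r ^ (3 / 4 : ℝ)) / r ^ 2) r := by
  have hp : ∀ p : ℝ, HasDerivAt (fun r : ℝ => r ^ p) (p * r ^ (p - 1)) r :=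
    fun p => Real.hasDerivAt_rpow_const (Or.inl hr.ne')
  constructor
  · refine (((hp (1 / 4)).const_mul δ).add ((hp (3 / 4)).const_mul A)).congr_deriv ?_
    norm_num
  · refine ((((hp (-3 / 4)).const_mul (1 / 4)).const_mul δ).add
      (((hp (-1 / 4)).const_mul (3 / 4)).const_mul A)).congr_deriv ?_
    have h₁ : r ^ (-3 / 4 - 1 : ℝ) = r ^ (1 / 4 : ℝ) / r ^ 2 := by
      rw [← Real.rpow_natCast, ← Real.rpow_sub hr]
      norm_num
    have h₂ : r ^ (-1 / 4 - 1 : ℝ) = r ^ (3 / 4 : ℝ) / r ^ 2 := by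
      rw [← Real.rpow_natCast, ← Real.rpow_sub hr]
      norm_num
    rw [h₁, h₂]
    ring

/-- Comparison of a solution of `|w''| ≤ ε r⁻² |w|`, `ε < 3/16`, with the barrier. -/
lemma le_barrier {w w' w'' : ℝ → ℝ} {b ε K δ A : ℝ} (hε : ε < 3 / 16) (hδ : 0 < δ) (hA : 0 ≤ A)
    (hw : ∀ r ∈ Ioc 0 b, HasDerivWithinAt w (w' r) (Ioc 0 b) r)
    (hw' : ∀ r ∈ Ioc 0 b, HasDerivWithinAt w' (w'' r) (Ioc 0 b) r)
    (hode : ∀ r ∈ Ioc 0 b, |w'' r| ≤ ε * |w r| / r ^ 2)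
    (hK : ∀ r ∈ Ioc 0 b, |w r| ≤ K * √r)
    (hb : w b ≤ A * b ^ (3 / 4 : ℝ)) {r : ℝ} (hr : r ∈ Ioc 0 b) :
    w r ≤ δ * r ^ (1 / 4 : ℝ) + A * r ^ (3 / 4 : ℝ) := by
  set ψ : ℝ → ℝ := fun r => δ * r ^ (1 / 4 : ℝ) + A * r ^ (3 / 4 : ℝ) with hψ
  change w r ≤ ψ r
  by_contra! hlt
  have hψpos : ∀ s, 0 < s → 0 < ψ s := fun s hs => by
    have h₁ := Real.rpow_pos_of_pos hs (1 / 4)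
    have h₂ := Real.rpow_pos_of_pos hs (3 / 4)
    simp only [hψ]
    positivity
  have hψ1 : ∀ s, 0 < s → HasDerivAt ψ _ s := fun s hs => (hasDerivAt_barrier δ A hs).1
  obtain ⟨a, ha0, har, haψ⟩ : ∃ a, 0 < a ∧ a < r ∧ w a ≤ ψ a := by
    have hlim : Tendsto (fun s : ℝ => K * s ^ (1 / 4 : ℝ)) (𝓝[>] 0) (𝓝 0) := by
      have hc : Continuous fun s : ℝ => K * s ^ (1 / 4 : ℝ) :=
        (Real.continuous_rpow_const (by norm_num)).const_mul K
      have := hc.tendsto 0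
      rw [Real.zero_rpow (by norm_num), mul_zero] at this
      exact this.mono_left nhdsWithin_le_nhds
    obtain ⟨a, haδ, ha⟩ := ((hlim.eventually_lt_const hδ).and (Ioo_mem_nhdsGT hr.1)).exists
    refine ⟨a, ha.1, ha.2, ?_⟩
    have hwa := (le_abs_self _).trans (hK a ⟨ha.1, ha.2.le.trans hr.2⟩)
    have hq := Real.rpow_pos_of_pos ha.1 (1 / 4)
    have hsq : √a = a ^ (1 / 4 : ℝ) * a ^ (1 / 4 : ℝ) := by
      rw [← Real.rpow_add ha.1, Real.sqrt_eq_rpow]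
      norm_num
    have h3 : 0 ≤ A * a ^ (3 / 4 : ℝ) := mul_nonneg hA (Real.rpow_nonneg ha.1.le _)
    rw [hsq, ← mul_assoc] at hwa
    have := mul_le_mul_of_nonneg_right haδ.le hq.le
    simp only [hψ]
    linarith
  have hsub : Icc a b ⊆ Ioc 0 b := fun s hs => ⟨ha0.trans_le hs.1, hs.2⟩
  have hcont : ContinuousOn (fun s => w s / ψ s) (Icc a b) := by
    intro s hs
    refine ContinuousWithinAt.div ((hw s (hsub hs)).continuousWithinAt.mono hsub)
      (hψ1 s (hsub hs).1).continuousAt.continuousWithinAt (hψpos s (hsub hs).1).ne'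
  obtain ⟨x, hx, hxmax⟩ := isCompact_Icc.exists_isMaxOn ⟨r, har.le, hr.2⟩ hcont
  have hxr : 1 < w x / ψ x :=
    ((one_lt_div (hψpos r hr.1)).2 hlt).trans_le (hxmax ⟨har.le, hr.2⟩)
  have hx0 : 0 < x := (hsub hx).1
  have hwx : ψ x < w x := (one_lt_div (hψpos x hx0)).1 hxr
  have hxa : a < x := lt_of_le_of_ne hx.1 (by rintro rfl; linarith)
  have hxb : x < b := by
    refine lt_of_le_of_ne hx.2 ?_
    rintro rfl
    have : 0 < δ * x ^ (1 / 4 : ℝ) := mul_pos hδ (Real.rpow_pos_of_pos hx0 _)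
    simp only [hψ] at hwx
    linarith
  have hnhds : ∀ s ∈ Ioo a b, Ioc 0 b ∈ 𝓝 s := fun s hs => Ioc_mem_nhds (ha0.trans hs.1) hs.2
  set m := w x / ψ x with hm
  have hmψ : m * ψ x = w x := div_mul_cancel₀ _ (hψpos x hx0).ne'
  have hmax : IsLocalMax (fun s => w s - m * ψ s) x := by
    filter_upwards [Ioo_mem_nhds hxa hxb] with s hs
    have hle : w s / ψ s ≤ m := hxmax ⟨hs.1.le, hs.2.le⟩
    rw [div_le_iff₀ (hψpos s (ha0.trans hs.1))] at hle
    linarith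
  have hsecond := hmax.second_deriv_nonpos
    (by
      filter_upwards [Ioo_mem_nhds hxa hxb] with s hs
      exact ((hw s (hsub ⟨hs.1.le, hs.2.le⟩)).hasDerivAt (hnhds s hs)).sub
        ((hψ1 s (ha0.trans hs.1)).const_mul m))
    (((hw' x (hsub hx)).hasDerivAt (hnhds x ⟨hxa, hxb⟩)).sub
      ((hasDerivAt_barrier δ A hx0).2.const_mul m))
  have hwpos : 0 < w x := (hψpos x hx0).trans hwx
  have hrew : m * (-(3 / 16) * (δ * x ^ (1 / 4 : ℝ) + A * x ^ (3 / 4 : ℝ)) / x ^ 2)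
      = -(3 / 16) * w x / x ^ 2 := by
    rw [← hmψ]
    simp only [hψ]
    ring
  rw [hrew] at hsecond
  have hbound := (neg_abs_le _).trans' (neg_le_neg (hode x (hsub hx)))
  rw [abs_of_pos hwpos] at hbound
  have : ε * w x / x ^ 2 < 3 / 16 * w x / x ^ 2 := by gcongr
  have hneg : -(3 / 16) * w x / x ^ 2 = -(3 / 16 * w x / x ^ 2) := by ring
  linarith

/-- Solutions of `|w''| ≤ ε r⁻² |w|` with `ε < 3/16` that are `O(r^{1/2})` are `O(r^{3/4})`. -/
lemma exists_abs_le_rpow {w w' w'' : ℝ → ℝ} {b ε K : ℝ} (hb : 0 < b) (hε : ε < 3 / 16)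
    (hw : ∀ r ∈ Ioc 0 b, HasDerivWithinAt w (w' r) (Ioc 0 b) r)
    (hw' : ∀ r ∈ Ioc 0 b, HasDerivWithinAt w' (w'' r) (Ioc 0 b) r)
    (hode : ∀ r ∈ Ioc 0 b, |w'' r| ≤ ε * |w r| / r ^ 2)
    (hK : ∀ r ∈ Ioc 0 b, |w r| ≤ K * √r) :
    ∃ A, 0 ≤ A ∧ ∀ r ∈ Ioc 0 b, |w r| ≤ A * r ^ (3 / 4 : ℝ) := by
  have hbp := Real.rpow_pos_of_pos hb (3 / 4)
  have hA : 0 ≤ |w b| / b ^ (3 / 4 : ℝ) := by positivity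
  have hAb : |w b| / b ^ (3 / 4 : ℝ) * b ^ (3 / 4 : ℝ) = |w b| := div_mul_cancel₀ _ hbp.ne'
  refine ⟨|w b| / b ^ (3 / 4 : ℝ), hA, fun r hr => ?_⟩
  have hrp := Real.rpow_pos_of_pos hr.1 (1 / 4)
  refine le_of_forall_pos_le_add fun η hη => ?_
  have hδ : 0 < η / r ^ (1 / 4 : ℝ) := by positivity
  have hδr : η / r ^ (1 / 4 : ℝ) * r ^ (1 / 4 : ℝ) = η := div_mul_cancel₀ _ hrp.ne'
  have h₁ := le_barrier hε hδ hA hw hw' hode hK (by rw [hAb]; exact le_abs_self _) hr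
  have h₂ := le_barrier (w := fun s => -w s) (w' := fun s => -w' s) (w'' := fun s => -w'' s)
    hε hδ hA (fun s hs => (hw s hs).neg) (fun s hs => (hw' s hs).neg)
    (by simpa only [abs_neg] using hode) (by simpa only [abs_neg] using hK)
    (by rw [hAb]; exact neg_le_abs _) hr
  rw [hδr] at h₁ h₂
  rw [abs_le]
  constructor <;> linarith

/-- **Regularity at the origin of scattering non-radiative profiles.** Let `|F(r,u)| ≤ γ|u|⁵`
with `F` continuous. There is `c* > 0`, depending only on `γ`, such that any C² solution of
`w'' = -r·F(r, w/r)` on `(0,r₀]` with `|w(r)| ≤ 2c₀ r^{1/2}` and `|w'(r₀)| ≤ c₀ r₀^{-1/2}`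
for some `0 < c₀ ≤ c*` has `w'(r) → κ` as `r → 0⁺`, and `|w(r) - κr| ≤ C r³` on `(0,r₀]`. -/
theorem origin_regularity (γ : ℝ) (hγ : 0 < γ) :
    ∃ cstar > 0, ∀ F : ℝ → ℝ → ℝ,
      ContinuousOn (Function.uncurry F) (Ioi (0 : ℝ) ×ˢ (univ : Set ℝ)) →
      (∀ r : ℝ, 0 < r → ∀ u : ℝ, |F r u| ≤ γ * |u| ^ 5) →
      ∀ r₀ : ℝ, 0 < r₀ → ∀ c₀ : ℝ, 0 < c₀ → c₀ ≤ cstar →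
      ∀ w w' : ℝ → ℝ,
      (∀ r ∈ Ioc (0 : ℝ) r₀, HasDerivWithinAt w (w' r) (Ioc (0 : ℝ) r₀) r) →
      (∀ r ∈ Ioc (0 : ℝ) r₀,
        HasDerivWithinAt w' (-(r * F r (w r / r))) (Ioc (0 : ℝ) r₀) r) →
      (∀ r ∈ Ioc (0 : ℝ) r₀, |w r| ≤ 2 * c₀ * Real.sqrt r) →
      |w' r₀| ≤ c₀ / Real.sqrt r₀ →
      ∃ κ : ℝ, Filter.Tendsto w' (nhdsWithin 0 (Ioi 0)) (nhds κ) ∧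
        ∃ C > 0, ∀ r ∈ Ioc (0 : ℝ) r₀, |w r - κ * r| ≤ C * r ^ 3 := by
  refine ⟨min 1 (1 / (100 * γ)), by positivity, ?_⟩
  intro F _ hF r₀ hr₀ c₀ hc₀ hc w w' hw hw' hbound _
  have hsource : ∀ r ∈ Ioc 0 r₀, |-(r * F r (w r / r))| ≤ γ * |w r| ^ 5 / r ^ 4 := by
    intro r hr
    have hr0 := hr.1
    rw [abs_neg, abs_mul, abs_of_pos hr0]
    calc r * |F r (w r / r)| ≤ r * (γ * |w r / r| ^ 5) := by gcongr; exact hF r hr0 _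
      _ = γ * |w r| ^ 5 / r ^ 4 := by
        rw [abs_div, abs_of_pos hr0]
        field_simp
  have hε : 16 * γ * c₀ ^ 4 < 3 / 16 := by
    have h1 : c₀ ≤ 1 := hc.trans (min_le_left _ _)
    have h2 : c₀ ≤ 1 / (100 * γ) := hc.trans (min_le_right _ _)
    rw [le_div_iff₀ (by positivity)] at h2
    have h4 : c₀ ^ 4 ≤ c₀ := pow_le_of_le_one hc₀.le h1 (by norm_num)
    nlinarith
  have hode : ∀ r ∈ Ioc 0 r₀,
      |-(r * F r (w r / r))| ≤ 16 * γ * c₀ ^ 4 * |w r| / r ^ 2 := by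
    intro r hr
    have hr0 := hr.1
    refine (hsource r hr).trans ?_
    calc γ * |w r| ^ 5 / r ^ 4 = γ * |w r| ^ 4 * |w r| / r ^ 4 := by ring
      _ ≤ γ * (2 * c₀ * √r) ^ 4 * |w r| / r ^ 4 := by gcongr; exact hbound r hr
      _ = 16 * γ * c₀ ^ 4 * |w r| / r ^ 2 := by
        have : √r ^ 4 = r ^ 2 := by
          rw [show √r ^ 4 = (√r ^ 2) ^ 2 by ring, Real.sq_sqrt hr0.le]
        rw [mul_pow, this]
        field_simp
        ring
  obtain ⟨A, hA, hwA⟩ := exists_abs_le_rpow hr₀ hε hw hw' hode hbound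
  have tendsto_zero : ∀ g : ℝ → ℝ, Continuous g → g 0 = 0 → Tendsto g (𝓝[>] 0) (𝓝 0) := by
    intro g hg h0
    simpa [h0] using (hg.tendsto 0).mono_left nhdsWithin_le_nhds
  have hmem : ∀ᶠ r in 𝓝[>] (0 : ℝ), r ∈ Ioc 0 r₀ := Ioc_mem_nhdsGT hr₀
  have hw0 : Tendsto w (𝓝[>] 0) (𝓝 0) := by
    refine squeeze_zero_norm' (hmem.mono hbound) (tendsto_zero _ ?_ ?_)
    · fun_prop
    · simp
  obtain ⟨κ, hκ, hκb⟩ := exists_tendsto_of_abs_deriv_le hr₀ hw'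
    (g := fun r => γ * A ^ 5 * (4 / 3) * r ^ (3 / 4 : ℝ))
    (g' := fun r => γ * A ^ 5 * (4 / 3) * (3 / 4 * r ^ (3 / 4 - 1 : ℝ)))
    (fun r hr => (Real.hasDerivAt_rpow_const (Or.inl hr.1.ne')).const_mul _)
    (fun r hr => by
      have hr0 := hr.1
      refine (hsource r hr).trans ?_
      calc γ * |w r| ^ 5 / r ^ 4 ≤ γ * (A * r ^ (3 / 4 : ℝ)) ^ 5 / r ^ 4 := by
            gcongr; exact hwA r hr
        _ = γ * A ^ 5 * ((r ^ (3 / 4 : ℝ)) ^ 5 / r ^ 4) := by ring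
        _ = γ * A ^ 5 * r ^ (3 / 4 - 1 : ℝ) := by
          congr 1
          rw [← Real.rpow_natCast, ← Real.rpow_natCast, ← Real.rpow_mul hr0.le,
            ← Real.rpow_sub hr0]
          norm_num
        _ = _ := by ring)
    (tendsto_zero _ ((Real.continuous_rpow_const (by norm_num)).const_mul _)
      (by simp [Real.zero_rpow]))
  obtain ⟨M, hM, hw'M⟩ : ∃ M, 0 ≤ M ∧ ∀ r ∈ Ioc 0 r₀, |w' r| ≤ M := by
    refine ⟨|κ| + γ * A ^ 5 * (4 / 3) * r₀ ^ (3 / 4 : ℝ), by positivity, fun r hr => ?_⟩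
    have h₁ := hκb r hr
    have h₂ : γ * A ^ 5 * (4 / 3) * r ^ (3 / 4 : ℝ) ≤ γ * A ^ 5 * (4 / 3) * r₀ ^ (3 / 4 : ℝ) := by
      have := hr.1
      gcongr
      exact hr.2
    have h₃ := abs_add_le (w' r - κ) κ
    rw [sub_add_cancel] at h₃
    linarith
  have hwM : ∀ r ∈ Ioc 0 r₀, |w r| ≤ M * r := by
    obtain ⟨l, hl, hlb⟩ := exists_tendsto_of_abs_deriv_le hr₀ hw
      (g := fun r => M * r) (g' := fun _ => M)
      (fun r _ => by simpa using (hasDerivAt_id r).const_mul M) hw'M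
      (tendsto_zero _ (by fun_prop) (by simp))
    obtain rfl := tendsto_nhds_unique hl hw0
    simpa using hlb
  have hw'κ : ∀ r ∈ Ioc 0 r₀, |w' r - κ| ≤ γ * M ^ 5 / 2 * r ^ 2 := by
    obtain ⟨l, hl, hlb⟩ := exists_tendsto_of_abs_deriv_le hr₀ hw'
      (g := fun r => γ * M ^ 5 / 2 * r ^ 2) (g' := fun r => γ * M ^ 5 / 2 * (2 * r))
      (fun r _ => by simpa using (hasDerivAt_pow 2 r).const_mul (γ * M ^ 5 / 2))
      (fun r hr => by
        have hr0 := hr.1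
        refine (hsource r hr).trans ?_
        calc γ * |w r| ^ 5 / r ^ 4 ≤ γ * (M * r) ^ 5 / r ^ 4 := by gcongr; exact hwM r hr
          _ = γ * M ^ 5 / 2 * (2 * r) := by field_simp)
      (tendsto_zero _ (by fun_prop) (by simp))
    obtain rfl := tendsto_nhds_unique hl hκ
    exact hlb
  refine ⟨κ, hκ, γ * M ^ 5 / 6 + 1, by positivity, fun r hr => ?_⟩
  obtain ⟨l, hl, hlb⟩ := exists_tendsto_of_abs_deriv_le hr₀
    (f := fun r => w r - κ * r) (f' := fun r => w' r - κ)
    (g := fun r => γ * M ^ 5 / 6 * r ^ 3) (g' := fun r => γ * M ^ 5 / 6 * (3 * r ^ 2))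
    (fun r hr =>
      ((hw r hr).sub ((hasDerivWithinAt_id r (Ioc 0 r₀)).const_mul κ)).congr_deriv (by simp))
    (fun r _ => by simpa using (hasDerivAt_pow 3 r).const_mul (γ * M ^ 5 / 6))
    (fun r hr => (hw'κ r hr).trans_eq (by ring))
    (tendsto_zero _ (by fun_prop) (by simp))
  have hl0 : Tendsto (fun r => w r - κ * r) (𝓝[>] 0) (𝓝 0) := by
    simpa using hw0.sub (tendsto_zero (fun r => κ * r) (by fun_prop) (by simp))
  obtain rfl := tendsto_nhds_unique hl hl0
  have h := hlb r hr
  have h3 : 0 < r ^ 3 := pow_pos hr.1 3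
  simp only [sub_zero] at h
  linarith
end
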